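/- arXiv:2009.12709 — 4 statements merged into one kernel-verified Lean document; each statement's English description precedes it below -/
import Mathlib

section
/- (Poincaré inequality for semi-periodic functions.) Let F = ℂ^D (D ≥ 1) with its standard Hermitian inner product, let U be a unitary operator on F, and set λ₀(U) := inf{λ ∈ [0,1] : e^{iλπ} or e^{−iλπ} is an eigenvalue of U} (this set is nonempty since every eigenvalue of U has modulus 1). If ψ : ℝ → F is continuously differentiable on [0, π] and satisfies the semi-periodic boundary condition ψ(π) = U ψ(0), then ∫₀^π ‖ψ′(φ)‖² dφ ≥ λ₀(U)² ∫₀^π ‖ψ(φ)‖² dφ. -/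
noncomputable section

/-- `λ₀(U) = inf { λ ∈ [0,1] : e^{iλπ} or e^{-iλπ} is an eigenvalue of U }`. -/
def lambda0 (D : ℕ)
    (U : EuclideanSpace ℂ (Fin D) →L[ℂ] EuclideanSpace ℂ (Fin D)) : ℝ :=
  sInf {l : ℝ | l ∈ Set.Icc (0 : ℝ) 1 ∧
    (Module.End.HasEigenvalue
        (↑U : EuclideanSpace ℂ (Fin D) →ₗ[ℂ] EuclideanSpace ℂ (Fin D))
        (Complex.exp (l * Real.pi * Complex.I)) ∨
     Module.End.HasEigenvalue
        (↑U : EuclideanSpace ℂ (Fin D) →ₗ[ℂ] EuclideanSpace ℂ (Fin D))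
        (Complex.exp (-(l * Real.pi) * Complex.I)))}


/-!
The proof is by calibration. For fixed `l` and `w` there is an explicit function `G` of position and
time such that every curve `f` satisfies, along itself,
`‖f'‖² - l² ‖f‖² = G' + ‖f' + l (tan α • f - (cos α)⁻¹ • w)‖² ≥ G'`, where `α = l (t - m)`.
Integrate over `[a, b]` with midpoint `m` and `θ = l (b - a) < π`. If `w` is chosen with
`f b - f a = 2 sin (θ / 2) • w`, the boundary term becomes
`l tan (θ / 2) (2 ‖w‖² - ‖f a‖² - ‖f b‖²)`, which is nonnegative exactly when
`2 ⟪f a, f b⟫ ≤ cos θ (‖f a‖² + ‖f b‖²)`. For `f b = U (f a)` with `U` unitary this reads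
`Re ⟪x, U x⟫ ≤ cos θ ‖x‖²` at `x = f a`, and it holds as soon as the spectrum of `U` avoids the arc
`|arg z| < θ`. The case `θ = π`, where `tan (θ / 2)` is infinite, follows by letting `θ` increase
to `π`.
-/

open MeasureTheory Real Set
open scoped InnerProductSpace NNReal

section AbsoluteContinuity

variable {X Y : Type*} [PseudoMetricSpace X] [PseudoMetricSpace Y] {a b : ℝ}

theorem absolutelyContinuousOnInterval_lipschitzWith_comp {g : X → Y} {f : ℝ → X} {K : ℝ≥0}
    (hg : LipschitzWith K g) (hf : AbsolutelyContinuousOnInterval f a b) :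
    AbsolutelyContinuousOnInterval (g ∘ f) a b := by
  unfold AbsolutelyContinuousOnInterval at hf ⊢
  refine squeeze_zero (fun _ ↦ Finset.sum_nonneg fun _ _ ↦ dist_nonneg) (fun I ↦ ?_)
    (by simpa only [mul_zero] using hf.const_mul (K : ℝ))
  rw [Finset.mul_sum]
  exact Finset.sum_le_sum fun i _ ↦ hg.dist_le_mul _ _

theorem absolutelyContinuousOnInterval_of_hasDerivWithinAt {F : Type*} [NormedAddCommGroup F]
    [NormedSpace ℝ F] {f f' : ℝ → F} (hf : ∀ t ∈ uIcc a b, HasDerivWithinAt f (f' t) (uIcc a b) t)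
    (hf' : ContinuousOn f' (uIcc a b)) : AbsolutelyContinuousOnInterval f a b := by
  obtain ⟨C, hC⟩ := isCompact_uIcc.exists_bound_of_continuousOn hf'
  exact ((convex_uIcc a b).lipschitzOnWith_of_nnnorm_hasDerivWithin_le (C := C.toNNReal) hf
    fun t ht ↦ NNReal.le_toNNReal_of_coe_le (hC t ht)).absolutelyContinuousOnInterval

theorem ae_hasDerivAt_of_hasDerivWithinAt_Icc {F : Type*} [NormedAddCommGroup F]
    [NormedSpace ℝ F] {f f' : ℝ → F} (hf : ∀ t ∈ Icc a b, HasDerivWithinAt f (f' t) (Icc a b) t) :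
    ∀ᵐ t ∂volume.restrict (Icc a b), HasDerivAt f (f' t) t := by
  rw [← Measure.restrict_congr_set Ioo_ae_eq_Icc]
  refine ae_restrict_of_forall_mem measurableSet_Ioo fun t ht ↦ ?_
  exact (hf t (Ioo_subset_Icc_self ht)).hasDerivAt (Icc_mem_nhds ht.1 ht.2)

end AbsoluteContinuity

section Calibration

variable {E : Type*} [NormedAddCommGroup E] [InnerProductSpace ℝ E]

/-- Hilbert's invariant integral for the energy `‖f'‖² - l² ‖f‖²`, as a function of the position `x`
and the phase `α = l (t - m)`, up to a factor `l`. The underlying field of extremals consists of the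
curves `cos α • v + sin α • w` with `w` fixed and `v` arbitrary, which have slope
`-l • (tan α • x - (cos α)⁻¹ • w)` at `(x, α)`. Meaningful only where `cos α ≠ 0`. -/
def calibration (w x : E) (α : ℝ) : ℝ :=
  2 * ⟪x, w⟫_ℝ / cos α - tan α * (‖x‖ ^ 2 + ‖w‖ ^ 2)

theorem norm_add_smul_sub_sq (x y w : E) (l τ σ : ℝ) :
    ‖y + l • (τ • x - σ • w)‖ ^ 2 =
      ‖y‖ ^ 2 + 2 * l * (τ * ⟪x, y⟫_ℝ - σ * ⟪y, w⟫_ℝ) +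
        l ^ 2 * (τ ^ 2 * ‖x‖ ^ 2 - 2 * τ * σ * ⟪x, w⟫_ℝ + σ ^ 2 * ‖w‖ ^ 2) := by
  simp only [norm_add_sq_real, norm_sub_sq_real, norm_smul, inner_smul_left, inner_smul_right,
    inner_sub_right, real_inner_comm x y, mul_pow, norm_eq_abs, sq_abs, conj_trivial]
  ring

theorem hasDerivAt_calibration {f : ℝ → E} {f' w : E} {l m t : ℝ} (hf : HasDerivAt f f' t)
    (hcos : cos (l * (t - m)) ≠ 0) :
    HasDerivAt (fun r ↦ l * calibration w (f r) (l * (r - m)))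
      (‖f'‖ ^ 2 - l ^ 2 * ‖f t‖ ^ 2 -
        ‖f' + l • (tan (l * (t - m)) • f t - (cos (l * (t - m)))⁻¹ • w)‖ ^ 2) t := by
  have hα : HasDerivAt (fun r ↦ l * (r - m)) l t := by
    simpa only [mul_one, id_eq] using ((hasDerivAt_id t).sub_const m).const_mul l
  have hinner : HasDerivAt (fun r ↦ 2 * ⟪f r, w⟫_ℝ) (2 * ⟪f', w⟫_ℝ) t := by
    simpa only [inner_zero_right, zero_add] using
      (hf.inner ℝ (hasDerivAt_const t w)).const_mul 2
  have hnorm : HasDerivAt (fun r ↦ ‖f r‖ ^ 2 + ‖w‖ ^ 2) (2 * ⟪f t, f'⟫_ℝ) t :=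
    hf.norm_sq.add_const _
  have htan := (hasDerivAt_tan hcos).comp t hα
  refine (((hinner.div hα.cos hcos).sub (htan.mul hnorm)).const_mul l).congr_deriv ?_
  rw [norm_add_smul_sub_sq, tan_eq_sin_div_cos]
  simp only [Function.comp_apply, tan_eq_sin_div_cos]
  field_simp
  ring_nf
  simp only [sin_sq]
  ring

theorem absolutelyContinuousOnInterval_calibration {f : ℝ → E} {a b l m : ℝ}
    (hf : AbsolutelyContinuousOnInterval f a b) (w : E)
    (hcos : ∀ t ∈ uIcc a b, cos (l * (t - m)) ≠ 0) :
    AbsolutelyContinuousOnInterval (fun t ↦ l * calibration w (f t) (l * (t - m))) a b := by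
  have hα : ContDiff ℝ 1 fun t : ℝ ↦ l * (t - m) := by fun_prop
  have hsec : AbsolutelyContinuousOnInterval (fun t ↦ (cos (l * (t - m)))⁻¹) a b :=
    (hα.cos.contDiffOn.inv hcos).absolutelyContinuousOnInterval
  have htan : AbsolutelyContinuousOnInterval (fun t ↦ tan (l * (t - m))) a b := by
    simp only [tan_eq_sin_div_cos]
    exact (hα.sin.contDiffOn.div hα.cos.contDiffOn hcos).absolutelyContinuousOnInterval
  have hinner : AbsolutelyContinuousOnInterval (fun t ↦ ⟪w, f t⟫_ℝ) a b :=
    absolutelyContinuousOnInterval_lipschitzWith_comp (innerSL ℝ w).lipschitz hf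
  have hnorm : AbsolutelyContinuousOnInterval (fun t ↦ ‖f t‖) a b :=
    absolutelyContinuousOnInterval_lipschitzWith_comp lipschitzWith_one_norm hf
  have hconst : AbsolutelyContinuousOnInterval (fun _ ↦ ‖w‖ ^ 2) a b :=
    contDiffOn_const.absolutelyContinuousOnInterval
  convert! ((hinner.const_mul 2).mul hsec |>.sub
    (htan.mul ((hnorm.mul hnorm).add hconst))).const_mul l using 2 with t
  simp [calibration, real_inner_comm, div_eq_mul_inv, sq]

theorem calibration_sub_calibration_neg {w x y : E} {α : ℝ} (h : y - x = (2 * sin α) • w) :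
    calibration w y α - calibration w x (-α) =
      tan α * (2 * ‖w‖ ^ 2 - (‖x‖ ^ 2 + ‖y‖ ^ 2)) := by
  have hw : ⟪y, w⟫_ℝ - ⟪x, w⟫_ℝ = 2 * sin α * ‖w‖ ^ 2 := by
    rw [← inner_sub_left, h, inner_smul_left, real_inner_self_eq_norm_sq, conj_trivial]
  rw [calibration, calibration, cos_neg, tan_neg, tan_eq_sin_div_cos]
  linear_combination 2 / cos α * hw

theorem exists_smul_eq_sub_of_inner_le {x y : E} {α : ℝ} (hα : sin α ≠ 0)
    (h : 2 * ⟪x, y⟫_ℝ ≤ cos (2 * α) * (‖x‖ ^ 2 + ‖y‖ ^ 2)) :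
    ∃ w : E, y - x = (2 * sin α) • w ∧ ‖x‖ ^ 2 + ‖y‖ ^ 2 ≤ 2 * ‖w‖ ^ 2 := by
  obtain ⟨w, hw⟩ : ∃ w : E, y - x = (2 * sin α) • w :=
    ⟨(2 * sin α)⁻¹ • (y - x), (smul_inv_smul₀ (mul_ne_zero two_ne_zero hα) _).symm⟩
  refine ⟨w, hw, ?_⟩
  have hnorm : ‖y‖ ^ 2 - 2 * ⟪x, y⟫_ℝ + ‖x‖ ^ 2 = 4 * sin α ^ 2 * ‖w‖ ^ 2 := by
    rw [real_inner_comm, ← norm_sub_sq_real, hw, norm_smul, mul_pow, norm_eq_abs, sq_abs]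
    ring
  have hcos : cos (2 * α) = 1 - 2 * sin α ^ 2 := by rw [cos_two_mul, cos_sq']; ring
  refine le_of_mul_le_mul_left ?_ (by positivity : 0 < 2 * sin α ^ 2)
  rw [hcos] at h
  linarith

end Calibration

section Wirtinger

variable {E : Type*} [NormedAddCommGroup E] [InnerProductSpace ℝ E] {f f' : ℝ → E} {a b : ℝ}

theorem sub_le_integral_of_calibration {w : E} {l m : ℝ} (hab : a ≤ b)
    (hf : AbsolutelyContinuousOnInterval f a b)
    (hf' : ∀ᵐ t ∂volume.restrict (Icc a b), HasDerivAt f (f' t) t)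
    (hint : IntervalIntegrable (fun t ↦ ‖f' t‖ ^ 2) volume a b)
    (hcos : ∀ t ∈ Icc a b, cos (l * (t - m)) ≠ 0) :
    l * calibration w (f b) (l * (b - m)) - l * calibration w (f a) (l * (a - m)) ≤
      (∫ t in a..b, ‖f' t‖ ^ 2) - l ^ 2 * ∫ t in a..b, ‖f t‖ ^ 2 := by
  have hac := absolutelyContinuousOnInterval_calibration hf w ((uIcc_of_le hab).symm ▸ hcos)
  have hf_sq : IntervalIntegrable (fun t ↦ l ^ 2 * ‖f t‖ ^ 2) volume a b :=
    ((hf.continuousOn.norm.pow 2).intervalIntegrable).const_mul _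
  rw [← hac.integral_deriv_eq_sub, ← intervalIntegral.integral_const_mul,
    ← intervalIntegral.integral_sub hint hf_sq]
  refine intervalIntegral.integral_mono_ae_restrict hab hac.intervalIntegrable_deriv
    (hint.sub hf_sq) ?_
  filter_upwards [hf', ae_restrict_mem measurableSet_Icc] with t hft ht
  rw [(hasDerivAt_calibration hft (hcos t ht)).deriv]
  exact sub_le_self _ (sq_nonneg _)

theorem wirtinger_of_inner_le_cos_of_lt_pi {θ : ℝ} (hab : a < b)
    (hf : AbsolutelyContinuousOnInterval f a b)
    (hf' : ∀ᵐ t ∂volume.restrict (Icc a b), HasDerivAt f (f' t) t)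
    (hint : IntervalIntegrable (fun t ↦ ‖f' t‖ ^ 2) volume a b)
    (hθ : θ ∈ Ioo 0 π) (h : 2 * ⟪f a, f b⟫_ℝ ≤ cos θ * (‖f a‖ ^ 2 + ‖f b‖ ^ 2)) :
    (θ / (b - a)) ^ 2 * ∫ t in a..b, ‖f t‖ ^ 2 ≤ ∫ t in a..b, ‖f' t‖ ^ 2 := by
  obtain ⟨hθ₀, hθπ⟩ := hθ
  have hba : 0 < b - a := sub_pos.2 hab
  set l := θ / (b - a)
  have hl₀ : 0 < l := div_pos hθ₀ hba
  have hlθ : l * (b - a) = θ := div_mul_cancel₀ θ hba.ne'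
  have hα : θ / 2 ∈ Ioo 0 (π / 2) := ⟨by linarith, by linarith⟩
  have hcos (t : ℝ) (ht : t ∈ Icc a b) : cos (l * (t - (a + b) / 2)) ≠ 0 :=
    (cos_pos_of_mem_Ioo ⟨by nlinarith [ht.1], by nlinarith [ht.2]⟩).ne'
  obtain ⟨w, hw, hw_le⟩ := exists_smul_eq_sub_of_inner_le (α := θ / 2)
    (sin_pos_of_pos_of_lt_pi hα.1 (by linarith)).ne' (by rwa [mul_div_cancel₀ θ two_ne_zero])
  have hG := sub_le_integral_of_calibration (w := w) hab.le hf hf' hint hcos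
  rw [show l * (b - (a + b) / 2) = θ / 2 by linear_combination hlθ / 2,
    show l * (a - (a + b) / 2) = -(θ / 2) by linear_combination -hlθ / 2,
    ← mul_sub, calibration_sub_calibration_neg hw] at hG
  have hboundary : 0 ≤ l * (tan (θ / 2) * (2 * ‖w‖ ^ 2 - (‖f a‖ ^ 2 + ‖f b‖ ^ 2))) :=
    mul_nonneg hl₀.le <| mul_nonneg (tan_pos_of_pos_of_lt_pi_div_two hα.1 hα.2).le <|
      sub_nonneg.2 hw_le
  linarith

theorem wirtinger_of_inner_le_cos {θ : ℝ} (hab : a < b)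
    (hf : AbsolutelyContinuousOnInterval f a b)
    (hf' : ∀ᵐ t ∂volume.restrict (Icc a b), HasDerivAt f (f' t) t)
    (hint : IntervalIntegrable (fun t ↦ ‖f' t‖ ^ 2) volume a b)
    (hθ : θ ∈ Icc 0 π) (h : 2 * ⟪f a, f b⟫_ℝ ≤ cos θ * (‖f a‖ ^ 2 + ‖f b‖ ^ 2)) :
    (θ / (b - a)) ^ 2 * ∫ t in a..b, ‖f t‖ ^ 2 ≤ ∫ t in a..b, ‖f' t‖ ^ 2 := by
  obtain rfl | hθ₀ := hθ.1.eq_or_lt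
  · simpa using intervalIntegral.integral_nonneg hab.le fun t _ ↦ sq_nonneg ‖f' t‖
  have hlt (η : ℝ) (hη : η ∈ Ioo 0 θ) :
      (η / (b - a)) ^ 2 * ∫ t in a..b, ‖f t‖ ^ 2 ≤ ∫ t in a..b, ‖f' t‖ ^ 2 := by
    refine wirtinger_of_inner_le_cos_of_lt_pi hab hf hf' hint
      ⟨hη.1, hη.2.trans_le hθ.2⟩ (h.trans ?_)
    gcongr
    exact cos_le_cos_of_nonneg_of_le_pi hη.1.le hθ.2 hη.2.le
  have hcont : Continuous fun η ↦ (η / (b - a)) ^ 2 * ∫ t in a..b, ‖f t‖ ^ 2 := by fun_prop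
  refine le_of_tendsto (hcont.continuousWithinAt (s := Iio θ) (x := θ)) ?_
  filter_upwards [Ioo_mem_nhdsLT hθ₀] with η hη using hlt η hη

end Wirtinger

section Spectrum

variable {H : Type*} [NormedAddCommGroup H] [InnerProductSpace ℂ H] [CompleteSpace H]

theorem re_inner_apply_le_of_spectrum_re_le {T : H →L[ℂ] H} [IsStarNormal T] {c : ℝ}
    (hT : ∀ z ∈ spectrum ℂ T, z.re ≤ c) (x : H) :
    (⟪x, T x⟫_ℂ).re ≤ c * ‖x‖ ^ 2 := by
  have hle : (realPart T : H →L[ℂ] H) ≤ algebraMap ℝ (H →L[ℂ] H) c := by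
    refine le_algebraMap_of_spectrum_le ?_ (realPart T).2
    rw [spectrum_realPart' T]
    exact forall_mem_image.2 hT
  have hpos := ((ContinuousLinearMap.le_def _ _).1 hle).re_inner_nonneg_right x
  have hadj : (⟪x, star T x⟫_ℂ).re = (⟪x, T x⟫_ℂ).re := by
    rw [ContinuousLinearMap.star_eq_adjoint, ContinuousLinearMap.adjoint_inner_right]
    exact inner_re_symm (𝕜 := ℂ) _ _
  have hreal : (⟪x, (realPart T : H →L[ℂ] H) x⟫_ℂ).re = (⟪x, T x⟫_ℂ).re := by
    rw [realPart_apply_coe, smul_apply, add_apply,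
      inner_smul_right_eq_smul, inner_add_right, Complex.smul_re, Complex.add_re, hadj, smul_eq_mul]
    ring
  have hconst : (⟪x, algebraMap ℝ (H →L[ℂ] H) c x⟫_ℂ).re = c * ‖x‖ ^ 2 := by
    rw [Algebra.algebraMap_eq_smul_one, smul_apply, one_apply_eq_self,
      inner_smul_right_eq_smul, Complex.smul_re, smul_eq_mul, ← RCLike.re_eq_complex_re,
      inner_self_eq_norm_sq]
  rw [sub_apply, inner_sub_right, map_sub, RCLike.re_eq_complex_re, hreal, hconst] at hpos
  exact sub_nonneg.1 hpos

/-- `hψ`, `hψ'` and `hint` together say that `ψ` lies in the Sobolev space `H¹(a, b)`. -/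
theorem poincare_semiperiodic_general {U : H →L[ℂ] H} (hU : U ∈ unitary (H →L[ℂ] H))
    {a b θ : ℝ} (hab : a < b) (hθ₀ : 0 ≤ θ) (hθ : ∀ z ∈ spectrum ℂ U, θ ≤ |z.arg|)
    {ψ ψ' : ℝ → H} (hψ : AbsolutelyContinuousOnInterval ψ a b)
    (hψ' : ∀ᵐ t ∂volume.restrict (Icc a b), HasDerivAt ψ (ψ' t) t)
    (hint : IntervalIntegrable (fun t ↦ ‖ψ' t‖ ^ 2) volume a b) (hbc : ψ b = U (ψ a)) :
    (θ / (b - a)) ^ 2 * ∫ t in a..b, ‖ψ t‖ ^ 2 ≤ ∫ t in a..b, ‖ψ' t‖ ^ 2 := by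
  let := InnerProductSpace.complexToReal (G := H)
  obtain _ | _ := subsingleton_or_nontrivial H
  · simp [norm_of_subsingleton]
  have hnormal : IsStarNormal U := ⟨hU.1.trans hU.2.symm⟩
  have hθπ : θ ≤ π := by
    obtain ⟨z, hz⟩ := spectrum.nonempty U
    exact (hθ z hz).trans (Complex.abs_arg_le_pi z)
  have hre (z : ℂ) (hz : z ∈ spectrum ℂ U) : z.re ≤ cos θ := by
    have hz_norm : ‖z‖ = 1 := spectrum.norm_eq_one_of_unitary hU hz
    rw [← Complex.norm_mul_cos_arg, hz_norm, one_mul, ← cos_abs]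
    exact cos_le_cos_of_nonneg_of_le_pi hθ₀ (Complex.abs_arg_le_pi z) (hθ z hz)
  refine wirtinger_of_inner_le_cos hab hψ hψ' hint ⟨hθ₀, hθπ⟩ ?_
  rw [hbc, ContinuousLinearMap.norm_map_of_mem_unitary hU, real_inner_eq_re_inner ℂ,
    RCLike.re_eq_complex_re]
  linarith [re_inner_apply_le_of_spectrum_re_le hre (ψ a)]

end Spectrum

section Lambda0

theorem hasEigenvalue_of_mem_spectrum {𝕜 E : Type*} [NontriviallyNormedField 𝕜] [CompleteSpace 𝕜]
    [NormedAddCommGroup E] [NormedSpace 𝕜 E] [FiniteDimensional 𝕜 E] {T : E →L[𝕜] E} {z : 𝕜}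
    (hz : z ∈ spectrum 𝕜 T) : Module.End.HasEigenvalue (T : E →ₗ[𝕜] E) z := by
  rw [Module.End.hasEigenvalue_iff_mem_spectrum]
  exact (AlgEquiv.spectrum_eq (Module.End.toContinuousLinearMap (𝕜 := 𝕜) E) (T : E →ₗ[𝕜] E)) ▸ hz

variable {D : ℕ} {U : EuclideanSpace ℂ (Fin D) →L[ℂ] EuclideanSpace ℂ (Fin D)}

theorem lambda0_nonneg : 0 ≤ lambda0 D U :=
  Real.sInf_nonneg fun _ hl ↦ hl.1.1

theorem lambda0_mul_pi_le_abs_arg (hU : U ∈ unitary _) {z : ℂ} (hz : z ∈ spectrum ℂ U) :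
    lambda0 D U * π ≤ |z.arg| := by
  have hz_norm : ‖z‖ = 1 := spectrum.norm_eq_one_of_unitary hU hz
  rw [← le_div_iff₀ pi_pos]
  refine csInf_le ⟨0, fun _ hl ↦ hl.1.1⟩
    ⟨⟨by positivity, div_le_one_of_le₀ (Complex.abs_arg_le_pi z) pi_nonneg⟩, ?_⟩
  have hcancel : ((|z.arg| / π : ℝ) : ℂ) * π = (|z.arg| : ℝ) := by
    rw [← Complex.ofReal_mul, div_mul_cancel₀ _ pi_ne_zero]
  have hexp : Complex.exp (z.arg * Complex.I) = z := by
    simpa [hz_norm] using Complex.norm_mul_exp_arg_mul_I z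
  rw [hcancel]
  obtain harg | harg := abs_choice z.arg
  · left
    rw [harg, hexp]
    exact hasEigenvalue_of_mem_spectrum hz
  · right
    rw [harg, Complex.ofReal_neg, neg_neg, hexp]
    exact hasEigenvalue_of_mem_spectrum hz

end Lambda0

/-- **Poincaré inequality for semi-periodic functions.**
If `ψ : ℝ → ℂ^D` is continuously differentiable on `[0, π]` (with derivative `ψ'`) and
satisfies the semi-periodic boundary condition `ψ(π) = U ψ(0)` for a unitary operator `U`,
then `∫₀^π ‖ψ'‖² ≥ λ₀(U)² ∫₀^π ‖ψ‖²`. -/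
theorem poincare_semiperiodic (D : ℕ) (hD : 1 ≤ D)
    (U : EuclideanSpace ℂ (Fin D) →L[ℂ] EuclideanSpace ℂ (Fin D))
    (hU : U ∈ unitary (EuclideanSpace ℂ (Fin D) →L[ℂ] EuclideanSpace ℂ (Fin D)))
    (ψ ψ' : ℝ → EuclideanSpace ℂ (Fin D))
    (hdiff : ∀ t ∈ Set.Icc (0 : ℝ) Real.pi,
      HasDerivWithinAt ψ (ψ' t) (Set.Icc (0 : ℝ) Real.pi) t)
    (hcont : ContinuousOn ψ' (Set.Icc (0 : ℝ) Real.pi))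
    (hbc : ψ Real.pi = U (ψ 0)) :
    lambda0 D U ^ 2 * ∫ φ in (0 : ℝ)..Real.pi, ‖ψ φ‖ ^ 2 ≤
      ∫ φ in (0 : ℝ)..Real.pi, ‖ψ' φ‖ ^ 2 := by
  have hIcc := Set.uIcc_of_le Real.pi_nonneg
  simpa only [sub_zero, mul_div_cancel_right₀ _ Real.pi_ne_zero] using
    poincare_semiperiodic_general hU Real.pi_pos (mul_nonneg lambda0_nonneg Real.pi_nonneg)
      (fun _ hz ↦ lambda0_mul_pi_le_abs_arg hU hz)
      (absolutelyContinuousOnInterval_of_hasDerivWithinAt (hIcc ▸ hdiff) (hIcc ▸ hcont))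
      (ae_hasDerivAt_of_hasDerivWithinAt_Icc hdiff)
      ((hcont.norm.pow 2).intervalIntegrable_of_Icc Real.pi_nonneg) hbc
end
end

section
/- (Covariant energy bound.) Fix d ≥ 1 and s > 0. Suppose that to every n ∈ ℕ and every half-open cube Q = Q(c, a) in ℝ^d there is assigned a nonnegative real number e_n(Q) such that: (scale covariance) e_n(Q(λc, λa)) = λ^{−2s} e_n(Q(c, a)) for all λ > 0; (translation invariance) e_n(Q(c + x, a)) = e_n(Q(c, a)) for all x ∈ ℝ^d; (superadditivity) for every finite collection of pairwise disjoint cubes Q_1, …, Q_J whose union is a cube Q, one has e_n(Q) ≥ min over all (n_1, …, n_J) ∈ ℕ^J with ∑_j n_j = n of ∑_{j=1}^J e_{n_j}(Q_j); (a priori positivity) there exists q ≥ 0 such that e_n(Q) > 0 for all n ≥ q and all cubes Q. Then there exists a constant C > 0, independent of n and Q, such that e_n(Q) ≥ C |Q|^{−2s/d} n^{1+2s/d} for all n ≥ q and all cubes Q, where |Q(c, a)| = a^d. -/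
/-- The half-open axis-parallel cube in `ℝ^d` with corner `c` and side length `a`. -/
def cube (d : ℕ) (c : Fin d → ℝ) (a : ℝ) : Set (Fin d → ℝ) :=
  {x | ∀ i, c i ≤ x i ∧ x i < c i + a}

/-!
Scaling and translation reduce everything to the energies `E n` in the unit cube. Cutting that
cube into `K ^ d` cubes of edge `1 / K` gives `K ^ (2 * s) * ∑ j, E (ν j) ≤ E n` for some
`ν 1 + ... + ν (K ^ d) = n`. With `K = 2` the factor exceeds `1`, which by strong induction yields
a linear bound `c * (n - b) ≤ E n`. Feeding this bound into a subdivision with `K ^ d ≈ n / (2 * b)`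
costs only a constant factor in the sum, while the prefactor `K ^ (2 * s)` is of order
`n ^ (2 * s / d)`.
-/

open Asymptotics Filter Topology

/-- `E` has `J`-fold splittings with gain `κ` if every `n` is a sum of `J` natural numbers whose
total `E`-value, multiplied by `κ`, is at most `E n`. For `E n` the energy of `n` particles in the
unit cube, this is superadditivity over a subdivision into `J` congruent cubes: `κ` is the factor
by which shrinking a unit cube to one of them raises its energy. -/
def HasSplitting (J : ℕ) (κ : ℝ) (E : ℕ → ℝ) : Prop :=
  ∀ n, ∃ ν : Fin J → ℕ, ∑ j, ν j = n ∧ κ * ∑ j, E (ν j) ≤ E n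

section Sequences

variable {E : ℕ → ℝ} {κ c b : ℝ}

theorem lt_sum_of_mul_sum_le {ι : Type*} [Fintype ι] {ν : ι → ℕ} (hκ : 1 < κ)
    (hnonneg : ∀ n, 0 ≤ E n) (hpos : 0 < E (∑ i, ν i))
    (hle : κ * ∑ i, E (ν i) ≤ E (∑ i, ν i)) (j : ι) : ν j < ∑ i, ν i := by
  refine (Finset.single_le_sum (fun i _ => (ν i).zero_le) (Finset.mem_univ j)).lt_of_ne
    fun hj => ?_
  have hsingle : E (ν j) ≤ ∑ i, E (ν i) :=
    Finset.single_le_sum (fun i _ => hnonneg (ν i)) (Finset.mem_univ j)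
  rw [hj] at hsingle
  exact (lt_mul_of_one_lt_left (hpos.trans_le hsingle) hκ).not_ge (hle.trans hsingle)

theorem mul_sub_card_mul_le_sum {ι : Type*} [Fintype ι] {ν : ι → ℕ}
    (h : ∀ i, c * (ν i - b) ≤ E (ν i)) :
    c * ((∑ i, ν i : ℕ) - Fintype.card ι * b) ≤ ∑ i, E (ν i) :=
  calc
    c * ((∑ i, ν i : ℕ) - Fintype.card ι * b) = ∑ i, c * (ν i - b) := by
      rw [← Finset.mul_sum, Finset.sum_sub_distrib]
      simp
    _ ≤ ∑ i, E (ν i) := Finset.sum_le_sum fun i _ => h i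

theorem exists_pos_forall_mem_mul_le {α : Type*} {f g : α → ℝ} (s : Finset α)
    (hg : ∀ x ∈ s, 0 ≤ g x) (hfg : ∀ x ∈ s, 0 < f x → 0 < g x) :
    ∃ c > 0, ∀ x ∈ s, c * f x ≤ g x := by
  have hev : ∀ᶠ c : ℝ in 𝓝[>] 0, ∀ x ∈ s, c * f x ≤ g x := by
    refine (eventually_all_finset s).2 fun x hx => ?_
    rcases le_or_gt (f x) 0 with hfx | hfx
    · filter_upwards [self_mem_nhdsWithin] with c hc
      exact (mul_nonpos_of_nonneg_of_nonpos (le_of_lt hc) hfx).trans (hg x hx)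
    · have hlim : Tendsto (fun c : ℝ => c * f x) (𝓝[>] 0) (𝓝 0) :=
        ((continuous_mul_const (f x)).tendsto' 0 0 (zero_mul _)).mono_left nhdsWithin_le_nhds
      exact (hlim.eventually_lt_const (hfg x hx hfx)).mono fun _ => le_of_lt
  exact (eventually_mem_nhdsWithin.and hev).exists

namespace HasSplitting

variable {J : ℕ}

theorem mul_sub_le (h : HasSplitting J κ E) (hκ : 0 ≤ κ) (hlin : ∀ m : ℕ, c * (m - b) ≤ E m)
    (n : ℕ) : κ * (c * (n - J * b)) ≤ E n := by
  obtain ⟨ν, rfl, hle⟩ := h n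
  have hsum := mul_sub_card_mul_le_sum fun j => hlin (ν j)
  rw [Fintype.card_fin] at hsum
  exact (mul_le_mul_of_nonneg_left hsum hκ).trans hle

theorem exists_mul_sub_le (h : HasSplitting J κ E) (hκ : 1 < κ) (hnonneg : ∀ n, 0 ≤ E n)
    (hpos : ∀ n : ℕ, b < n → 0 < E n) : ∃ c > 0, ∀ n : ℕ, c * (n - b) ≤ E n := by
  obtain ⟨N, hN⟩ := exists_nat_ge ((κ * (J * b) - b) / (κ - 1))
  rw [div_le_iff₀ (sub_pos.2 hκ)] at hN
  obtain ⟨c, hc, hsmall⟩ := exists_pos_forall_mem_mul_le (f := fun n : ℕ => n - b)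
    (Finset.range N) (fun n _ => hnonneg n) fun n _ hn => hpos n (sub_pos.1 hn)
  refine ⟨c, hc, fun n => ?_⟩
  induction n using Nat.strong_induction_on with
  | _ n ih =>
  rcases lt_or_ge n N with hnN | hnN
  · exact hsmall n (Finset.mem_range.2 hnN)
  rcases le_or_gt (n : ℝ) b with hnb | hnb
  · exact (mul_nonpos_of_nonneg_of_nonpos hc.le (sub_nonpos.2 hnb)).trans (hnonneg n)
  obtain ⟨ν, rfl, hle⟩ := h n
  have hsum := mul_sub_card_mul_le_sum fun j =>
    ih (ν j) (lt_sum_of_mul_sum_le hκ hnonneg (hpos _ hnb) hle j)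
  rw [Fintype.card_fin] at hsum
  set n := ∑ j, ν j
  -- The gain `κ` beats the loss of `b` per piece once `n ≥ N`.
  have hgain : (n : ℝ) - b ≤ κ * (n - J * b) := by
    have : (N : ℝ) * (κ - 1) ≤ n * (κ - 1) := by gcongr
    linarith
  calc
    c * (n - b) ≤ c * (κ * (n - J * b)) := by gcongr
    _ = κ * (c * (n - J * b)) := by ring
    _ ≤ κ * ∑ j, E (ν j) := by gcongr
    _ ≤ E n := hle

end HasSplitting

theorem exists_nat_pow_le_and_rpow_inv_le {d : ℕ} (hd : d ≠ 0) {y : ℝ} (hy : 1 ≤ y) :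
    ∃ K : ℕ, 1 ≤ K ∧ (K : ℝ) ^ d ≤ y ∧ y ^ (d⁻¹ : ℝ) ≤ 2 * K := by
  have hy0 : 0 ≤ y := zero_le_one.trans hy
  have hroot : 1 ≤ y ^ (d⁻¹ : ℝ) := Real.one_le_rpow hy (by positivity)
  have hfloor : 1 ≤ ⌊y ^ (d⁻¹ : ℝ)⌋₊ := (Nat.one_le_floor_iff _).2 hroot
  refine ⟨⌊y ^ (d⁻¹ : ℝ)⌋₊, hfloor, ?_, ?_⟩
  · calc
      (⌊y ^ (d⁻¹ : ℝ)⌋₊ : ℝ) ^ d ≤ (y ^ (d⁻¹ : ℝ)) ^ d := by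
        gcongr
        exact Nat.floor_le (zero_le_one.trans hroot)
      _ = y := Real.rpow_inv_natCast_pow hy0 hd
  · have hlt := Nat.lt_floor_add_one (y ^ (d⁻¹ : ℝ))
    have hcast : (1 : ℝ) ≤ ⌊y ^ (d⁻¹ : ℝ)⌋₊ := mod_cast hfloor
    linarith

theorem mul_rpow_le_of_hasSplitting {d : ℕ} (hd : d ≠ 0) {t : ℝ} (ht : 0 ≤ t)
    (hsplit : ∀ K : ℕ, 1 ≤ K → HasSplitting (K ^ d) ((K : ℝ) ^ t) E) (hc : 0 ≤ c) (hb : 0 < b)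
    (hlin : ∀ n : ℕ, c * (n - b) ≤ E n) {n : ℕ} (hn : 2 * b ≤ n) :
    c / 2 / (2 ^ t * (2 * b) ^ (t / d)) * (n : ℝ) ^ (1 + t / d) ≤ E n := by
  have hn0 : (0 : ℝ) < n := by linarith
  -- Cubes of edge `1 / K` with at least `2 * b` particles each on average.
  obtain ⟨K, hK, hKd, hKn⟩ :=
    exists_nat_pow_le_and_rpow_inv_le hd ((one_le_div (by positivity)).2 hn)
  have hhalf : (n : ℝ) / 2 ≤ n - (K ^ d : ℕ) * b := by
    rw [le_div_iff₀ (by positivity)] at hKd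
    push_cast
    linarith
  have hgain : ((n : ℝ) / (2 * b)) ^ (t / d) / 2 ^ t ≤ (K : ℝ) ^ t :=
    calc
      ((n : ℝ) / (2 * b)) ^ (t / d) / 2 ^ t
          = (((n : ℝ) / (2 * b)) ^ (d⁻¹ : ℝ)) ^ t / 2 ^ t := by
        rw [← Real.rpow_mul (by positivity), inv_mul_eq_div]
      _ ≤ (2 * K) ^ t / 2 ^ t := by gcongr
      _ = (K : ℝ) ^ t := by
        rw [Real.mul_rpow zero_le_two K.cast_nonneg, mul_div_cancel_left₀ _ (by positivity)]
  calc
    c / 2 / (2 ^ t * (2 * b) ^ (t / d)) * (n : ℝ) ^ (1 + t / d)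
        = ((n : ℝ) / (2 * b)) ^ (t / d) / 2 ^ t * (c * (n / 2)) := by
      rw [Real.rpow_one_add' hn0.le (by positivity), Real.div_rpow hn0.le (by positivity)]
      ring
    _ ≤ (K : ℝ) ^ t * (c * (n - (K ^ d : ℕ) * b)) := by gcongr
    _ ≤ E n := (hsplit K hK).mul_sub_le (by positivity) hlin n

theorem isBigO_rpow_of_hasSplitting {d : ℕ} (hd : d ≠ 0) {t : ℝ} (ht : 0 < t)
    (hnonneg : ∀ n, 0 ≤ E n) (hpos : ∀ᶠ n in atTop, 0 < E n)
    (hsplit : ∀ K : ℕ, 1 ≤ K → HasSplitting (K ^ d) ((K : ℝ) ^ t) E) :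
    (fun n : ℕ => (n : ℝ) ^ (1 + t / d)) =O[atTop] E := by
  obtain ⟨q, hq⟩ := eventually_atTop.1 hpos
  have hb : (0 : ℝ) < q + 1 := by positivity
  obtain ⟨c, hc, hlin⟩ := (hsplit 2 one_le_two).exists_mul_sub_le (b := q + 1)
    (Real.one_lt_rpow (by norm_num) ht) hnonneg
    fun n hn => hq n (by have : q + 1 < n := mod_cast hn; lia)
  set C : ℝ := c / 2 / (2 ^ t * (2 * (q + 1)) ^ (t / d))
  have hC : 0 < C := by positivity
  refine .of_bound C⁻¹ ?_
  filter_upwards [tendsto_natCast_atTop_atTop.eventually_ge_atTop (2 * (q + 1 : ℝ))] with n hn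
  rw [Real.norm_of_nonneg (by positivity), Real.norm_of_nonneg (hnonneg n), le_inv_mul_iff₀ hC]
  exact mul_rpow_le_of_hasSplitting hd ht.le hsplit hc.le hb hlin hn

end Sequences

section Grid

variable {d K : ℕ}

theorem cube_eq_pi_Ico (c : Fin d → ℝ) (a : ℝ) :
    cube d c a = Set.univ.pi fun i => Set.Ico (c i) (c i + a) := by
  ext x
  simp [cube]

/-- The corner of the cell with index `k` in the grid of `K ^ d` cubes of side length `a` which
subdivides the cube with corner `c` and side length `K * a`. -/
def gridCorner (c : Fin d → ℝ) (a : ℝ) (k : Fin d → Fin K) : Fin d → ℝ :=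
  fun i => c i + (k i : ℕ) * a

theorem monotone_add_natCast_mul {a : ℝ} (ha : 0 ≤ a) (c : ℝ) :
    Monotone fun k : ℕ => c + k * a := by
  intro k l hkl
  dsimp only
  gcongr

theorem iUnion_Ico_map_add_one {β : Type*} [LinearOrder β] {f : ℕ → β} (hf : Monotone f) (n : ℕ) :
    ⋃ k : Fin n, Set.Ico (f k) (f (k + 1)) = Set.Ico (f 0) (f n) := by
  have hlt : ⋃ k < n, Set.Ico (f k) (f (k + 1)) = Set.Ico (f 0) (f n) := by
    induction n with
    | zero => simp
    | succ n ih =>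
      rw [Set.biUnion_lt_succ, ih, Set.Ico_union_Ico_eq_Ico (hf n.zero_le) (hf n.le_succ)]
  rw [← hlt]
  ext x
  simp [Fin.exists_iff]

theorem cube_gridCorner_eq_pi_Ico (c : Fin d → ℝ) (a : ℝ) (k : Fin d → Fin K) :
    cube d (gridCorner c a k) a =
      Set.univ.pi fun i => Set.Ico (c i + (k i : ℕ) * a) (c i + ((k i : ℕ) + 1 : ℕ) * a) := by
  rw [cube_eq_pi_Ico]
  refine congrArg _ (funext fun i => ?_)
  simp only [gridCorner]
  push_cast
  ring_nf

theorem pairwise_disjoint_cube_gridCorner (c : Fin d → ℝ) {a : ℝ} (ha : 0 ≤ a) :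
    Pairwise fun k l : Fin d → Fin K =>
      Disjoint (cube d (gridCorner c a k) a) (cube d (gridCorner c a l) a) := by
  intro k l hkl
  obtain ⟨i, hi⟩ := Function.ne_iff.1 hkl
  rw [cube_gridCorner_eq_pi_Ico, cube_gridCorner_eq_pi_Ico, Set.disjoint_univ_pi]
  exact ⟨i, (monotone_add_natCast_mul ha (c i)).pairwise_disjoint_on_Ico_succ
    (Fin.val_injective.ne hi)⟩

theorem iUnion_cube_gridCorner (c : Fin d → ℝ) {a : ℝ} (ha : 0 ≤ a) :
    ⋃ k : Fin d → Fin K, cube d (gridCorner c a k) a = cube d c (K * a) := by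
  simp_rw [cube_gridCorner_eq_pi_Ico]
  rw [cube_eq_pi_Ico, Set.iUnion_univ_pi fun i (k : Fin K) =>
    Set.Ico (c i + (k : ℕ) * a) (c i + ((k : ℕ) + 1 : ℕ) * a)]
  refine congrArg _ (funext fun i => ?_)
  rw [iUnion_Ico_map_add_one (monotone_add_natCast_mul ha (c i))]
  simp

end Grid

section Energy

variable {d : ℕ} {e : ℕ → (Fin d → ℝ) → ℝ → ℝ} {r : ℝ}

/-- Scale covariance of degree `r` of an assignment `e n c a` of energies to particle numbers `n`
and cubes with corner `c` and side length `a`. -/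
def IsScaleCovariant (r : ℝ) (e : ℕ → (Fin d → ℝ) → ℝ → ℝ) : Prop :=
  ∀ n (c : Fin d → ℝ) (a lam : ℝ), 0 < a → 0 < lam →
    e n (lam • c) (lam * a) = lam ^ r * e n c a

/-- Invariance of an assignment of energies to cubes under translations of the cubes. -/
def IsTranslationInvariant (e : ℕ → (Fin d → ℝ) → ℝ → ℝ) : Prop :=
  ∀ n (c x : Fin d → ℝ) (a : ℝ), 0 < a → e n (c + x) a = e n c a

/-- Superadditivity of an assignment of energies over partitions of a cube into cubes. The minimum
over the distributions `ν` of the `n` particles is encoded by the existence of a `ν` whose total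
energy is at most that of the large cube. -/
def IsSuperadditive (e : ℕ → (Fin d → ℝ) → ℝ → ℝ) : Prop :=
  ∀ (J : ℕ) (c : Fin J → Fin d → ℝ) (a : Fin J → ℝ) (C : Fin d → ℝ) (A : ℝ),
    (∀ j, 0 < a j) → 0 < A →
    (Pairwise fun i j => Disjoint (cube d (c i) (a i)) (cube d (c j) (a j))) →
    (⋃ j, cube d (c j) (a j)) = cube d C A →
    ∀ n : ℕ, ∃ ν : Fin J → ℕ, (∑ j, ν j) = n ∧ (∑ j, e (ν j) (c j) (a j)) ≤ e n C A

theorem IsScaleCovariant.eq_rpow_mul (hscale : IsScaleCovariant r e)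
    (htrans : IsTranslationInvariant e) (n : ℕ) (c : Fin d → ℝ) {a : ℝ} (ha : 0 < a) :
    e n c a = a ^ r * e n 0 1 :=
  calc
    e n c a = e n (a • 0) (a * 1) := by simpa using htrans n 0 c a ha
    _ = a ^ r * e n 0 1 := hscale n 0 1 a one_pos ha

theorem IsSuperadditive.exists_sum_gridCorner_le (hsuper : IsSuperadditive e) {K : ℕ}
    (hK : 1 ≤ K) (c : Fin d → ℝ) {a : ℝ} (ha : 0 < a) (n : ℕ) :
    ∃ (ν : Fin (K ^ d) → ℕ) (k : Fin (K ^ d) → Fin d → Fin K), ∑ j, ν j = n ∧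
      ∑ j, e (ν j) (gridCorner c a (k j)) a ≤ e n c (K * a) := by
  let k : Fin (K ^ d) ≃ (Fin d → Fin K) := finFunctionFinEquiv.symm
  obtain ⟨ν, hν⟩ := hsuper (K ^ d) (fun j => gridCorner c a (k j)) (fun _ => a) c (K * a)
    (fun _ => ha) (by positivity)
    ((pairwise_disjoint_cube_gridCorner c ha.le).comp_of_injective k.injective)
    ((k.surjective.iUnion_comp fun l => cube d (gridCorner c a l) a).trans
      (iUnion_cube_gridCorner c ha.le)) n
  exact ⟨ν, k, hν⟩

theorem IsSuperadditive.hasSplitting (hsuper : IsSuperadditive e) (hscale : IsScaleCovariant r e)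
    (htrans : IsTranslationInvariant e) {K : ℕ} (hK : 1 ≤ K) :
    HasSplitting (K ^ d) ((K : ℝ) ^ (-r)) fun n => e n 0 1 := by
  intro n
  have hK0 : (0 : ℝ) < K := mod_cast hK
  obtain ⟨ν, k, hν, hle⟩ := hsuper.exists_sum_gridCorner_le hK 0 (inv_pos.2 hK0) n
  refine ⟨ν, hν, ?_⟩
  calc
    (K : ℝ) ^ (-r) * ∑ j, e (ν j) 0 1
        = ∑ j, e (ν j) (gridCorner 0 (K : ℝ)⁻¹ (k j)) (K : ℝ)⁻¹ := by
      rw [Real.rpow_neg_eq_inv_rpow, Finset.mul_sum]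
      exact Finset.sum_congr rfl fun j _ => (hscale.eq_rpow_mul htrans _ _ (inv_pos.2 hK0)).symm
    _ ≤ e n 0 (K * (K : ℝ)⁻¹) := hle
    _ = e n 0 1 := by rw [mul_inv_cancel₀ hK0.ne']

end Energy

/-- **Covariant energy bound.**
If an assignment `(n, Q) ↦ e_n(Q) ≥ 0` of energies to particle numbers and cubes is
scale-covariant of degree `-2s`, translation-invariant, superadditive over partitions of a
cube into subcubes, and positive for all `n ≥ q`, then `e_n(Q) ≥ C |Q|^{-2s/d} n^{1+2s/d}`
for all `n ≥ q`, with a constant `C > 0` independent of `n` and `Q`. -/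
theorem covariant_energy_bound (d : ℕ) (hd : 1 ≤ d) (s : ℝ) (hs : 0 < s)
    (e : ℕ → (Fin d → ℝ) → ℝ → ℝ)
    (hnonneg : ∀ n (c : Fin d → ℝ) (a : ℝ), 0 < a → 0 ≤ e n c a)
    (hscale : ∀ n (c : Fin d → ℝ) (a lam : ℝ), 0 < a → 0 < lam →
      e n (lam • c) (lam * a) = lam ^ (-(2 * s)) * e n c a)
    (htrans : ∀ n (c x : Fin d → ℝ) (a : ℝ), 0 < a → e n (c + x) a = e n c a)
    (hsuper : ∀ (J : ℕ) (c : Fin J → Fin d → ℝ) (a : Fin J → ℝ)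
        (C : Fin d → ℝ) (A : ℝ), (∀ j, 0 < a j) → 0 < A →
        (Pairwise fun i j => Disjoint (cube d (c i) (a i)) (cube d (c j) (a j))) →
        (⋃ j, cube d (c j) (a j)) = cube d C A →
        ∀ n : ℕ, ∃ ν : Fin J → ℕ, (∑ j, ν j) = n ∧
          (∑ j, e (ν j) (c j) (a j)) ≤ e n C A)
    (q : ℕ) (hpos : ∀ n ≥ q, ∀ (c : Fin d → ℝ) (a : ℝ), 0 < a → 0 < e n c a) :
    ∃ C > 0, ∀ n ≥ q, ∀ (c : Fin d → ℝ) (a : ℝ), 0 < a →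
      C * (a ^ d) ^ (-(2 * s / d)) * (n : ℝ) ^ (1 + 2 * s / d) ≤ e n c a := by
  have hd0 : d ≠ 0 := Nat.one_le_iff_ne_zero.1 hd
  have hunit (n : ℕ) (c : Fin d → ℝ) {a : ℝ} (ha : 0 < a) : e n c a = a ^ (-(2 * s)) * e n 0 1 :=
    IsScaleCovariant.eq_rpow_mul hscale htrans n c ha
  have hgrowth : (fun n : ℕ => (n : ℝ) ^ (1 + 2 * s / d)) =O[atTop] fun n => e n 0 1 := by
    refine isBigO_rpow_of_hasSplitting hd0 (by positivity) (fun n => hnonneg n 0 1 one_pos)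
      (eventually_atTop.2 ⟨q, fun n hn => hpos n hn 0 1 one_pos⟩) fun K hK => ?_
    simpa only [neg_neg] using IsSuperadditive.hasSplitting hsuper hscale htrans hK
  obtain ⟨C, hC, hbound⟩ := bound_of_isBigO_nat_atTop hgrowth
  refine ⟨C⁻¹, inv_pos.2 hC, fun n hn c a ha => ?_⟩
  have hvol : (a ^ d) ^ (-(2 * s / d)) = a ^ (-(2 * s)) := by
    rw [← Real.rpow_natCast_mul ha.le]
    congr 1
    field_simp
  have hn1 : C⁻¹ * (n : ℝ) ^ (1 + 2 * s / d) ≤ e n 0 1 := by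
    have hle := hbound (hpos n hn 0 1 one_pos).ne'
    rwa [Real.norm_of_nonneg (by positivity), Real.norm_of_nonneg (hnonneg n 0 1 one_pos),
      ← inv_mul_le_iff₀ hC] at hle
  rw [hvol, hunit n c ha, mul_right_comm, mul_comm]
  gcongr
end

section
/- (Local uncertainty principle.) For every dimension d ≥ 1 there exists a constant C₁ > 0 depending only on d such that the following holds. For every N ≥ 1, every smooth compactly supported Ψ : (ℝ^d)^N → ℂ with ∫_{(ℝ^d)^N} |Ψ|² = 1, and every half-open cube Q ⊂ ℝ^d, one has ∫_{(ℝ^d)^N} ∑_{j=1}^N 1_Q(x_j) ‖∇_{x_j} Ψ(x)‖² dx ≥ C₁ (∫_Q ρ_Ψ^{1+2/d}) / (∫_Q ρ_Ψ)^{2/d} − C₁^{−1} |Q|^{−2/d} ∫_Q ρ_Ψ, with the convention that the first term on the right is zero when ∫_Q ρ_Ψ = 0. -/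
open MeasureTheory

/-- The one-body density of an `N`-body wave function `Ψ` on `(ℝ^d)^N`:
`ρ_Ψ(y) = ∑_j ∫ |Ψ(x_1, …, x_{j-1}, y, x_{j+1}, …, x_N)|² ∏_{k≠j} dx_k`. -/
noncomputable def density (d N : ℕ) (Ψ : (Fin N → Fin d → ℝ) → ℂ) (y : Fin d → ℝ) : ℝ :=
  ∑ j : Fin N,
    ∫ x' : {k : Fin N // k ≠ j} → Fin d → ℝ,
      ‖Ψ (fun k => if h : k = j then y else x' ⟨k, h⟩)‖ ^ 2

/-! Differentiating `ρ = density d N Ψ` under the integral sign, Cauchy–Schwarz bounds `|∂_i ρ|` by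
`2 √ρ √τ`, where `τ` is the one-body kinetic energy density (the Hoffmann-Ostenhof inequality), and
the left-hand side is `∫_Q τ` by Fubini. So the claim reduces to a Gagliardo–Nirenberg inequality
`∫_Q ρ^(1+2/d) ≤ C (∫_Q ρ)^(2/d) (∫_Q τ + |Q|^(-2/d) ∫_Q ρ)` for functions on `ℝ^d`.

For `d ≥ 2`, write `f = ρ^s` with `s d/(d-1) = 1 + 2/d`. On every line parallel to an axis, `f` is
at most the integral of `|∂_i f|` plus the mean of `f`, so Gagliardo's grid-lines inequality gives
`∫_Q f^(d/(d-1)) ≤ (∫_Q (max_i |∂_i f| + f/a))^(d/(d-1))`; the mean is what produces the error term.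
By Cauchy–Schwarz the square of the last integral is at most a multiple of
`∫_Q ρ^(2s-1) · ∫_Q (τ + ρ/a²)`. Interpolating `ρ^(2s-1)` between `ρ` and `ρ^(1+2/d)` leaves a power
of `∫_Q ρ^(1+2/d)` below the one on the left, which is absorbed. For `d = 1` the same line estimate
bounds `ρ` pointwise. -/

section Holder

variable {α : Type*} [MeasurableSpace α] {μ : Measure α} {f g : α → ℝ}

lemma integrable_rpow_mul_rpow (hf : Integrable f μ) (hg : Integrable g μ) (hf0 : ∀ x, 0 ≤ f x)
    (hg0 : ∀ x, 0 ≤ g x) {p q : ℝ} (hp : 0 ≤ p) (hq : 0 ≤ q) (hpq : p + q = 1) :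
    Integrable (fun x => f x ^ p * g x ^ q) μ := by
  refine ((hf.const_mul p).add (hg.const_mul q)).mono'
    ((hf.aemeasurable.pow_const p).mul (hg.aemeasurable.pow_const q)).aestronglyMeasurable
    (.of_forall fun x => ?_)
  rw [Real.norm_of_nonneg (mul_nonneg (Real.rpow_nonneg (hf0 x) p) (Real.rpow_nonneg (hg0 x) q))]
  exact Real.geom_mean_le_arith_mean2_weighted hp hq (hf0 x) (hg0 x) hpq

lemma integral_rpow_mul_rpow_le (hf : Integrable f μ) (hg : Integrable g μ)
    (hf0 : ∀ x, 0 ≤ f x) (hg0 : ∀ x, 0 ≤ g x) {p q : ℝ} (hp : 0 ≤ p) (hq : 0 ≤ q)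
    (hpq : p + q = 1) :
    ∫ x, f x ^ p * g x ^ q ∂μ ≤ (∫ x, f x ∂μ) ^ p * (∫ x, g x ∂μ) ^ q := by
  have hfp := Real.rpow_nonneg (integral_nonneg (μ := μ) hf0) p
  have hgq := Real.rpow_nonneg (integral_nonneg (μ := μ) hg0) q
  rw [← ENNReal.ofReal_le_ofReal_iff (mul_nonneg hfp hgq),
    ofReal_integral_eq_lintegral_ofReal (integrable_rpow_mul_rpow hf hg hf0 hg0 hp hq hpq)
      (.of_forall fun x => mul_nonneg (Real.rpow_nonneg (hf0 x) p) (Real.rpow_nonneg (hg0 x) q)),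
    ENNReal.ofReal_mul hfp, ← ENNReal.ofReal_rpow_of_nonneg (integral_nonneg hf0) hp,
    ← ENNReal.ofReal_rpow_of_nonneg (integral_nonneg hg0) hq,
    ofReal_integral_eq_lintegral_ofReal hf (.of_forall hf0),
    ofReal_integral_eq_lintegral_ofReal hg (.of_forall hg0)]
  simpa only [ENNReal.ofReal_mul (Real.rpow_nonneg (hf0 _) p),
      ENNReal.ofReal_rpow_of_nonneg (hf0 _) hp, ENNReal.ofReal_rpow_of_nonneg (hg0 _) hq] using
    ENNReal.lintegral_mul_norm_pow_le hf.aemeasurable.ennreal_ofReal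
      hg.aemeasurable.ennreal_ofReal hp hq hpq

lemma integral_rpow_interpolation {p q θ η : ℝ} (hf0 : ∀ x, 0 ≤ f x)
    (hfp : Integrable (fun x => f x ^ p) μ) (hfq : Integrable (fun x => f x ^ q) μ) (hp : 0 ≤ p)
    (hq : 0 ≤ q) (hθ : 0 ≤ θ) (hη : 0 ≤ η) (hθη : θ + η = 1) :
    ∫ x, f x ^ (p * θ + q * η) ∂μ ≤ (∫ x, f x ^ p ∂μ) ^ θ * (∫ x, f x ^ q ∂μ) ^ η := by
  simpa only [← Real.rpow_mul (hf0 _),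
      ← Real.rpow_add_of_nonneg (hf0 _) (mul_nonneg hp hθ) (mul_nonneg hq hη)] using
    integral_rpow_mul_rpow_le hfp hfq (fun x => Real.rpow_nonneg (hf0 x) p)
      (fun x => Real.rpow_nonneg (hf0 x) q) hθ hη hθη

lemma sq_integral_le_mul_integral (hf : Integrable f μ) (hg : Integrable g μ)
    (hf0 : ∀ x, 0 ≤ f x) (hg0 : ∀ x, 0 ≤ g x) {w : α → ℝ} (hw : ∀ x, w x ^ 2 ≤ f x * g x) :
    (∫ x, w x ∂μ) ^ 2 ≤ (∫ x, f x ∂μ) * ∫ x, g x ∂μ := by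
  have hw' x : ‖w x‖ ≤ f x ^ (1 / 2 : ℝ) * g x ^ (1 / 2 : ℝ) := by
    rw [← Real.mul_rpow (hf0 x) (hg0 x), ← Real.sqrt_eq_rpow]
    exact Real.abs_le_sqrt (hw x)
  have h := (norm_integral_le_of_norm_le (integrable_rpow_mul_rpow hf hg hf0 hg0
    one_half_pos.le one_half_pos.le (add_halves 1)) (.of_forall hw')).trans
      (integral_rpow_mul_rpow_le hf hg hf0 hg0 one_half_pos.le one_half_pos.le (add_halves 1))
  rwa [← Real.mul_rpow (integral_nonneg hf0) (integral_nonneg hg0), ← Real.sqrt_eq_rpow,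
    Real.norm_eq_abs, Real.le_sqrt (abs_nonneg _)
      (mul_nonneg (integral_nonneg hf0) (integral_nonneg hg0)), sq_abs] at h

end Holder

section GridLines

open scoped ENNReal

variable {ι : Type*} [Fintype ι] [DecidableEq ι] {X : ι → Type*} [∀ i, MeasurableSpace (X i)]
  {μ : ∀ i, Measure (X i)} [∀ i, SigmaFinite (μ i)]

lemma lintegral_update_eq_lintegral_pi [Subsingleton ι] (w : (∀ i, X i) → ℝ≥0∞) (x : ∀ i, X i)
    (i : ι) : ∫⁻ t, w (Function.update x i t) ∂μ i = ∫⁻ y, w y ∂Measure.pi μ := by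
  have hi : {i} = (Finset.univ : Finset ι) :=
    Finset.eq_univ_of_forall fun j => Finset.mem_singleton.2 (Subsingleton.elim j i)
  rw [← congrFun (lmarginal_singleton w i) x, hi, lmarginal_univ]

lemma lintegral_rpow_le_of_le_lintegral_update {p : ℝ}
    (hp : (Fintype.card ι : ℝ).HolderConjugate p) {f w : (∀ i, X i) → ℝ≥0∞} (hw : Measurable w)
    (hf : ∀ᵐ x ∂Measure.pi μ, ∀ i, f x ≤ ∫⁻ t, w (Function.update x i t) ∂μ i) :
    ∫⁻ x, f x ^ p ∂Measure.pi μ ≤ (∫⁻ x, w x ∂Measure.pi μ) ^ p := by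
  refine (lintegral_mono_ae ?_).trans (lintegral_prod_lintegral_pow_le μ hp hw)
  filter_upwards [hf] with x hx
  calc f x ^ p = ∏ _i : ι, f x ^ (1 / (Fintype.card ι - 1 : ℝ)) := by
        rw [Finset.prod_const, Finset.card_univ, ← ENNReal.rpow_mul_natCast, hp.conjugate_eq,
          one_div_mul_eq_div]
    _ ≤ _ := Finset.prod_le_prod' fun i _ =>
        ENNReal.rpow_le_rpow (hx i) (one_div_nonneg.2 hp.sub_one_pos.le)

end GridLines

section Interval

open intervalIntegral Set

lemma le_integral_add_average_of_abs_deriv_le {g φ : ℝ → ℝ} {a b x : ℝ} (hab : a < b)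
    (hg : ContinuousOn g (Icc a b)) (hg' : DifferentiableOn ℝ g (Ioo a b))
    (hφ : IntervalIntegrable φ volume a b) (hgφ : ∀ t ∈ Ioo a b, |deriv g t| ≤ φ t)
    (hx : x ∈ Icc a b) :
    g x ≤ ∫ t in a..b, φ t + g t / (b - a) := by
  have hφ0 : 0 ≤ᵐ[volume.restrict (Ioc a b)] φ := by
    rw [← restrict_Ioo_eq_restrict_Ioc]
    exact (ae_restrict_iff' measurableSet_Ioo).2
      (.of_forall fun t ht => (abs_nonneg _).trans (hgφ t ht))
  have osc {u v : ℝ} (hu : a ≤ u) (huv : u ≤ v) (hv : v ≤ b) :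
      |g v - g u| ≤ ∫ t in a..b, φ t :=
    (norm_sub_le_integral_of_norm_deriv_le_of_le huv (hg.mono (Icc_subset_Icc hu hv))
      (hg'.mono (Ioo_subset_Ioo hu hv))
      (.of_forall fun t ht => hgφ t (Ioo_subset_Ioo hu hv ht))
      (hφ.mono_set (uIcc_subset_uIcc (mem_uIcc_of_le hu (huv.trans hv))
        (mem_uIcc_of_le (hu.trans huv) hv)))).trans
    (integral_mono_interval hu huv hv hφ0 hφ)
  have hg_int : IntervalIntegrable g volume a b := hg.intervalIntegrable_of_Icc hab.le
  have key : ∀ t ∈ Icc a b, g x ≤ (∫ t in a..b, φ t) + g t := by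
    intro t ht
    rcases le_total t x with h | h
    · linarith [le_of_abs_le (osc ht.1 h hx.2)]
    · linarith [neg_le_of_abs_le (osc hx.1 h ht.2)]
  have avg := integral_mono_on hab.le intervalIntegrable_const
    (intervalIntegrable_const.add hg_int) key
  rw [integral_add intervalIntegrable_const hg_int, intervalIntegral.integral_const,
    intervalIntegral.integral_const, smul_eq_mul, smul_eq_mul] at avg
  have hba : 0 < b - a := sub_pos.2 hab
  rw [integral_add hφ (hg_int.div_const _), intervalIntegral.integral_div,
    ← mul_le_mul_iff_right₀ hba, mul_add, mul_div_cancel₀ _ hba.ne']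
  exact avg

end Interval

section Cube

open Set

lemma hasDerivAt_comp_update {ι F : Type*} [Finite ι] [DecidableEq ι] [NormedAddCommGroup F]
    [NormedSpace ℝ F] {f : (ι → ℝ) → F} (hf : Differentiable ℝ f) (x : ι → ℝ) (i : ι) (t : ℝ) :
    HasDerivAt (fun s => f (Function.update x i s))
      (fderiv ℝ f (Function.update x i t) (Pi.single i 1)) t := by
  have := Fintype.ofFinite ι
  exact (hf _).hasFDerivAt.comp_hasDerivAt t (hasDerivAt_update x i t)

variable {d : ℕ} (c : Fin d → ℝ) (a : ℝ)

lemma cube_eq_pi : cube d c a = univ.pi fun i => Ico (c i) (c i + a) := by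
  ext x
  simp only [cube, mem_ofPred_eq, mem_univ_pi, mem_Ico]

lemma measurableSet_cube : MeasurableSet (cube d c a) := by
  rw [cube_eq_pi]
  exact .univ_pi fun _ => measurableSet_Ico

lemma volume_restrict_cube :
    (volume : Measure (Fin d → ℝ)).restrict (cube d c a) =
      Measure.pi fun i => volume.restrict (Ico (c i) (c i + a)) := by
  rw [cube_eq_pi, volume_pi, Measure.restrict_pi_pi]

variable {a}

lemma integrableOn_cube_of_continuous {f : (Fin d → ℝ) → ℝ} (hf : Continuous f) :
    IntegrableOn f (cube d c a) :=
  (hf.continuousOn.integrableOn_compact (isCompact_Icc (a := c) (b := fun i => c i + a))).mono_set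
    fun _ hx => ⟨fun i => (hx i).1, fun i => (hx i).2.le⟩

variable {c} {f φ : (Fin d → ℝ) → ℝ}

lemma ofReal_le_lintegral_update (ha : 0 < a) (hf : Differentiable ℝ f) (hf0 : ∀ x, 0 ≤ f x)
    (hφ : Continuous φ) {i : Fin d} (hfφ : ∀ x, |fderiv ℝ f x (Pi.single i 1)| ≤ φ x)
    {x : Fin d → ℝ} (hx : x ∈ cube d c a) :
    ENNReal.ofReal (f x) ≤ ∫⁻ t in Ico (c i) (c i + a),
      ENNReal.ofReal (φ (Function.update x i t) + f (Function.update x i t) / a) := by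
  have hu : Continuous (Function.update x i) := continuous_const.update i continuous_id
  have hfu : Continuous fun t => f (Function.update x i t) := hf.continuous.comp hu
  have hφu : Continuous fun t => φ (Function.update x i t) := hφ.comp hu
  have hab : c i < c i + a := lt_add_of_pos_right (c i) ha
  have line := le_integral_add_average_of_abs_deriv_le hab hfu.continuousOn
    (fun t _ => (hasDerivAt_comp_update hf x i t).differentiableAt.differentiableWithinAt)
    (hφu.intervalIntegrable _ _)
    (fun t _ => by rw [(hasDerivAt_comp_update hf x i t).deriv]; exact hfφ _)
    ⟨(hx i).1, (hx i).2.le⟩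
  rw [Function.update_eq_self, add_sub_cancel_left, intervalIntegral.integral_of_le hab.le,
    ← integral_Ico_eq_integral_Ioc] at line
  exact (ENNReal.ofReal_le_ofReal line).trans_eq (ofReal_integral_eq_lintegral_ofReal
    ((hφu.add (hfu.div_const a)).integrableOn_Icc.mono_set Ico_subset_Icc_self)
    (.of_forall fun t => add_nonneg ((abs_nonneg _).trans (hfφ _)) (div_nonneg (hf0 _) ha.le)))

lemma lintegral_cube_ofReal {w : (Fin d → ℝ) → ℝ} (hw : Continuous w) (hw0 : ∀ x, 0 ≤ w x) :
    ∫⁻ x in cube d c a, ENNReal.ofReal (w x) = ENNReal.ofReal (∫ x in cube d c a, w x) :=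
  (ofReal_integral_eq_lintegral_ofReal (integrableOn_cube_of_continuous c hw)
    (.of_forall hw0)).symm

lemma integral_cube_rpow_le {p : ℝ} (hp : (d : ℝ).HolderConjugate p) (ha : 0 < a)
    (hf : Differentiable ℝ f) (hf0 : ∀ x, 0 ≤ f x) (hφ : Continuous φ)
    (hfφ : ∀ x i, |fderiv ℝ f x (Pi.single i 1)| ≤ φ x) :
    ∫ x in cube d c a, f x ^ p ≤ (∫ x in cube d c a, φ x + f x / a) ^ p := by
  have hp0 : 0 ≤ p := hp.symm.nonneg
  have : NeZero d := ⟨by rintro rfl; simpa using hp.pos⟩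
  have hw : Continuous fun x => φ x + f x / a := hφ.add (hf.continuous.div_const a)
  have hw0 x : 0 ≤ φ x + f x / a :=
    add_nonneg ((abs_nonneg _).trans (hfφ x 0)) (div_nonneg (hf0 x) ha.le)
  have gridlines := lintegral_rpow_le_of_le_lintegral_update
    (μ := fun i => volume.restrict (Ico (c i) (c i + a)))
    (by rwa [Fintype.card_fin]) hw.measurable.ennreal_ofReal (by
      rw [← volume_restrict_cube]
      exact (ae_restrict_mem (measurableSet_cube c a)).mono fun x hx i =>
        ofReal_le_lintegral_update ha hf hf0 hφ (hfφ · i) hx)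
  simp only [← volume_restrict_cube, ENNReal.ofReal_rpow_of_nonneg (hf0 _) hp0] at gridlines
  rw [lintegral_cube_ofReal hw hw0, ENNReal.ofReal_rpow_of_nonneg (integral_nonneg hw0) hp0,
    lintegral_cube_ofReal (hf.continuous.rpow_const fun _ => .inr hp0)
      fun x => Real.rpow_nonneg (hf0 x) p] at gridlines
  exact (ENNReal.ofReal_le_ofReal_iff (Real.rpow_nonneg (integral_nonneg hw0) p)).1 gridlines

lemma le_integral_cube {c : Fin 1 → ℝ} {f φ : (Fin 1 → ℝ) → ℝ} (ha : 0 < a)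
    (hf : Differentiable ℝ f) (hf0 : ∀ x, 0 ≤ f x) (hφ : Continuous φ)
    (hfφ : ∀ x i, |fderiv ℝ f x (Pi.single i 1)| ≤ φ x) {x : Fin 1 → ℝ} (hx : x ∈ cube 1 c a) :
    f x ≤ ∫ x in cube 1 c a, φ x + f x / a := by
  have hw : Continuous fun x => φ x + f x / a := hφ.add (hf.continuous.div_const a)
  have hw0 x : 0 ≤ φ x + f x / a :=
    add_nonneg ((abs_nonneg _).trans (hfφ x 0)) (div_nonneg (hf0 x) ha.le)
  have line := ofReal_le_lintegral_update ha hf hf0 hφ (hfφ · 0) hx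
  rw [lintegral_update_eq_lintegral_pi (μ := fun i => volume.restrict (Ico (c i) (c i + a)))
    (fun x => ENNReal.ofReal (φ x + f x / a)), ← volume_restrict_cube,
    lintegral_cube_ofReal hw hw0] at line
  exact (ENNReal.ofReal_le_ofReal_iff (integral_nonneg hw0)).1 line

end Cube

section GagliardoNirenberg

lemma sq_mul_rpow_add_rpow_div_le {r u s : ℝ} (hr : 0 ≤ r) (hu : 0 ≤ u) (hs : 1 ≤ s) (a : ℝ) :
    (s * r ^ (s - 1) * (2 * (√r * √u)) + r ^ s / a) ^ 2 ≤
      r ^ (2 * s - 1) * ((4 * s ^ 2 + 1) * (u + r / a ^ 2)) := by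
  have hrs : r ^ s = r ^ (s - 1) * √r ^ 2 := by
    rw [Real.sq_sqrt hr, ← Real.rpow_add_one' hr (by linarith), sub_add_cancel]
  have hr2s : r ^ (2 * s - 1) = (r ^ (s - 1) * √r) ^ 2 := by
    rw [show 2 * s - 1 = (s - 1) * 2 + 1 by ring, Real.rpow_add_one' hr (by linarith),
      Real.rpow_mul hr, Real.rpow_two, mul_pow, Real.sq_sqrt hr]
  have cauchy_schwarz : (2 * s * √u + √r / a) ^ 2 ≤ (4 * s ^ 2 + 1) * (u + r / a ^ 2) := by
    rw [show u + r / a ^ 2 = √u ^ 2 + (√r / a) ^ 2 by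
      rw [div_pow, Real.sq_sqrt hu, Real.sq_sqrt hr]]
    linarith [sq_nonneg (√u - 2 * s * (√r / a))]
  calc (s * r ^ (s - 1) * (2 * (√r * √u)) + r ^ s / a) ^ 2
      = (r ^ (s - 1) * √r) ^ 2 * (2 * s * √u + √r / a) ^ 2 := by rw [hrs]; ring
    _ ≤ r ^ (2 * s - 1) * ((4 * s ^ 2 + 1) * (u + r / a ^ 2)) := by rw [hr2s]; gcongr

lemma abs_fderiv_rpow_le {E : Type*} [NormedAddCommGroup E] [NormedSpace ℝ E] {ρ : E → ℝ}
    {x v : E} {s B : ℝ} (hs : 1 ≤ s) (hρ : DifferentiableAt ℝ ρ x) (hρ0 : 0 ≤ ρ x)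
    (hB : |fderiv ℝ ρ x v| ≤ B) :
    |fderiv ℝ (fun y => ρ y ^ s) x v| ≤ s * ρ x ^ (s - 1) * B := by
  have hcoeff : 0 ≤ s * ρ x ^ (s - 1) := mul_nonneg (by linarith) (Real.rpow_nonneg hρ0 _)
  rw [(hρ.hasFDerivAt.rpow_const (.inr hs)).fderiv, _root_.smul_apply, smul_eq_mul,
    abs_mul, abs_of_nonneg hcoeff]
  exact mul_le_mul_of_nonneg_left hB hcoeff

variable {d : ℕ} {c : Fin d → ℝ} {a : ℝ} {ρ τ : (Fin d → ℝ) → ℝ}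

lemma integrableOn_cube_rpow (hρ : Continuous ρ) {q : ℝ} (hq : 0 ≤ q) :
    IntegrableOn (fun x => ρ x ^ q) (cube d c a) :=
  integrableOn_cube_of_continuous c (hρ.rpow_const fun _ => .inr hq)

lemma sq_integral_cube_rpow_le (hρ : Continuous ρ) (hρ0 : ∀ x, 0 ≤ ρ x) (hτ : Continuous τ)
    (hτ0 : ∀ x, 0 ≤ τ x) {s : ℝ} (hs : 1 ≤ s) :
    (∫ x in cube d c a, s * ρ x ^ (s - 1) * (2 * (√(ρ x) * √(τ x))) + ρ x ^ s / a) ^ 2 ≤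
      (4 * s ^ 2 + 1) * ((∫ x in cube d c a, ρ x ^ (2 * s - 1)) *
        ((∫ x in cube d c a, τ x) + (∫ x in cube d c a, ρ x) / a ^ 2)) := by
  have hτint := integrableOn_cube_of_continuous (a := a) c hτ
  have hρint := integrableOn_cube_of_continuous (a := a) c (hρ.div_const (a ^ 2))
  have h := sq_integral_le_mul_integral
    (integrableOn_cube_rpow (c := c) (a := a) hρ (q := 2 * s - 1) (by linarith))
    ((hτint.add hρint).const_mul (4 * s ^ 2 + 1)) (fun x => Real.rpow_nonneg (hρ0 x) _)
    (fun x => mul_nonneg (by positivity)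
      (add_nonneg (hτ0 x) (div_nonneg (hρ0 x) (sq_nonneg a))))
    fun x => sq_mul_rpow_add_rpow_div_le (hρ0 x) (hτ0 x) hs a
  rwa [integral_const_mul, mul_left_comm, integral_add' hτint hρint, integral_div] at h

lemma integral_cube_rpow_mul_le {p s : ℝ} (hp : (d : ℝ).HolderConjugate p) (hs : 1 ≤ s)
    (ha : 0 < a) (hρ : Differentiable ℝ ρ) (hρ0 : ∀ x, 0 ≤ ρ x) (hτ : Continuous τ)
    (hρτ : ∀ x i, |fderiv ℝ ρ x (Pi.single i 1)| ≤ 2 * (√(ρ x) * √(τ x))) :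
    ∫ x in cube d c a, ρ x ^ (s * p) ≤
      (∫ x in cube d c a, s * ρ x ^ (s - 1) * (2 * (√(ρ x) * √(τ x))) + ρ x ^ s / a) ^ p := by
  have hs1 : 0 ≤ s - 1 := sub_nonneg.2 hs
  have hρc := hρ.continuous
  simpa only [← Real.rpow_mul (hρ0 _)] using
    integral_cube_rpow_le (c := c) hp ha (hρ.rpow_const fun _ => .inr hs)
      (fun x => Real.rpow_nonneg (hρ0 x) s) (by fun_prop)
      fun x i => abs_fderiv_rpow_le hs (hρ x) (hρ0 x) (hρτ x i)

lemma le_of_le_rpow_of_sq_le {I W B t : ℝ} (hI : 0 ≤ I) (hW : 0 ≤ W) (hB : 0 ≤ B) (ht : t < 1)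
    (hIW : I ≤ W ^ (1 - t)⁻¹) (hWB : W ^ 2 ≤ B * I ^ (1 - 2 * t)) : I ≤ B := by
  rcases hI.eq_or_lt with rfl | hI
  · exact hB
  have hIW' : I ^ (1 - t) ≤ W := (Real.le_rpow_inv_iff_of_pos hI.le hW (sub_pos.2 ht)).1 hIW
  refine le_of_mul_le_mul_right ?_ (Real.rpow_pos_of_pos hI (1 - 2 * t))
  calc I * I ^ (1 - 2 * t) = (I ^ (1 - t)) ^ 2 := by
        rw [← Real.rpow_one_add' hI.le (by linarith), ← Real.rpow_mul_natCast hI.le]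
        ring_nf
    _ ≤ W ^ 2 := by gcongr
    _ ≤ B * I ^ (1 - 2 * t) := hWB

lemma integral_cube_rpow_interpolation (hρ : Continuous ρ) (hρ0 : ∀ x, 0 ≤ ρ x) {t : ℝ}
    (ht0 : 0 ≤ t) (ht : t ≤ 1 / 2) :
    ∫ x in cube d c a, ρ x ^ (2 * ((1 + 2 * t) * (1 - t)) - 1) ≤
      (∫ x in cube d c a, ρ x) ^ (2 * t) *
        (∫ x in cube d c a, ρ x ^ (1 + 2 * t)) ^ (1 - 2 * t) := by
  have h := integral_rpow_interpolation (p := 1) (q := 1 + 2 * t) hρ0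
    (integrableOn_cube_rpow (c := c) (a := a) hρ zero_le_one)
    (integrableOn_cube_rpow hρ (by linarith)) zero_le_one (by linarith) (by linarith)
    (by linarith) (add_sub_cancel (2 * t) 1)
  rw [show 1 * (2 * t) + (1 + 2 * t) * (1 - 2 * t) = 2 * ((1 + 2 * t) * (1 - t)) - 1 by ring] at h
  simpa only [Real.rpow_one] using h

lemma gagliardoNirenberg_cube_one {c : Fin 1 → ℝ} {ρ τ : (Fin 1 → ℝ) → ℝ} (ha : 0 < a)
    (hρ : Differentiable ℝ ρ) (hρ0 : ∀ x, 0 ≤ ρ x) (hτ : Continuous τ) (hτ0 : ∀ x, 0 ≤ τ x)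
    (hρτ : ∀ x i, |fderiv ℝ ρ x (Pi.single i 1)| ≤ 2 * (√(ρ x) * √(τ x))) :
    ∫ x in cube 1 c a, ρ x ^ 3 ≤ 5 * ((∫ x in cube 1 c a, ρ x) ^ 2 *
      ((∫ x in cube 1 c a, τ x) + (∫ x in cube 1 c a, ρ x) / a ^ 2)) := by
  set W := ∫ x in cube 1 c a, 2 * (√(ρ x) * √(τ x)) + ρ x / a
  have sup_bound : ∀ x ∈ cube 1 c a, ρ x ≤ W := fun x hx =>
    le_integral_cube ha hρ hρ0 (by have := hρ.continuous; fun_prop) hρτ hx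
  have hW : W ^ 2 ≤ 5 * ((∫ x in cube 1 c a, ρ x) *
      ((∫ x in cube 1 c a, τ x) + (∫ x in cube 1 c a, ρ x) / a ^ 2)) := by
    have := sq_integral_cube_rpow_le (c := c) (a := a) hρ.continuous hρ0 hτ hτ0 le_rfl
    norm_num at this
    exact this
  calc ∫ x in cube 1 c a, ρ x ^ 3 ≤ ∫ x in cube 1 c a, W ^ 2 * ρ x :=
        setIntegral_mono_on (integrableOn_cube_of_continuous c (hρ.continuous.pow 3))
          (integrableOn_cube_of_continuous c (continuous_const.mul hρ.continuous))
          (measurableSet_cube c a) fun x hx => by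
            rw [pow_succ]
            gcongr
            · exact hρ0 x
            · exact hρ0 x
            · exact sup_bound x hx
    _ = W ^ 2 * ∫ x in cube 1 c a, ρ x := integral_const_mul _ _
    _ ≤ 5 * ((∫ x in cube 1 c a, ρ x) *
          ((∫ x in cube 1 c a, τ x) + (∫ x in cube 1 c a, ρ x) / a ^ 2)) *
        ∫ x in cube 1 c a, ρ x := mul_le_mul_of_nonneg_right hW (integral_nonneg hρ0)
    _ = _ := by ring

lemma gagliardoNirenberg_cube_of_two_le (hd : 2 ≤ d) (ha : 0 < a) (hρ : Differentiable ℝ ρ)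
    (hρ0 : ∀ x, 0 ≤ ρ x) (hτ : Continuous τ) (hτ0 : ∀ x, 0 ≤ τ x)
    (hρτ : ∀ x i, |fderiv ℝ ρ x (Pi.single i 1)| ≤ 2 * (√(ρ x) * √(τ x))) :
    ∫ x in cube d c a, ρ x ^ (1 + 2 / (d : ℝ)) ≤ 7 * ((∫ x in cube d c a, ρ x) ^ (2 / (d : ℝ)) *
      ((∫ x in cube d c a, τ x) + (∫ x in cube d c a, ρ x) / a ^ 2)) := by
  have hd2 : (2 : ℝ) ≤ d := by exact_mod_cast hd
  rw [div_eq_mul_inv 2]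
  set t : ℝ := (d : ℝ)⁻¹
  have ht0 : 0 < t := by positivity
  have ht : t ≤ 1 / 2 := by rw [one_div]; exact inv_anti₀ two_pos hd2
  have hp : (d : ℝ).HolderConjugate (1 - t)⁻¹ :=
    Real.holderConjugate_iff.2 ⟨by linarith, by rw [inv_inv]; exact add_sub_cancel _ _⟩
  set s : ℝ := (1 + 2 * t) * (1 - t) with hs_def
  have hs1 : 1 ≤ s := by nlinarith
  have hs98 : s ≤ 9 / 8 := by linarith [sq_nonneg (t - 1 / 4)]
  have hs : 4 * s ^ 2 + 1 ≤ 7 := by nlinarith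
  set M := ∫ x in cube d c a, ρ x
  set K := (∫ x in cube d c a, τ x) + M / a ^ 2
  set I := ∫ x in cube d c a, ρ x ^ (1 + 2 * t)
  set W := ∫ x in cube d c a, s * ρ x ^ (s - 1) * (2 * (√(ρ x) * √(τ x))) + ρ x ^ s / a
  have hM : 0 ≤ M := integral_nonneg hρ0
  have hK : 0 ≤ K := add_nonneg (integral_nonneg hτ0) (by positivity)
  have hI : 0 ≤ I := integral_nonneg fun x => Real.rpow_nonneg (hρ0 x) _
  have hA : 0 ≤ ∫ x in cube d c a, ρ x ^ (2 * s - 1) :=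
    integral_nonneg fun x => Real.rpow_nonneg (hρ0 x) _
  have hW : 0 ≤ W := integral_nonneg fun x => by have := hρ0 x; positivity
  have gagliardo : I ≤ W ^ (1 - t)⁻¹ := by
    have h := integral_cube_rpow_mul_le (c := c) hp hs1 ha hρ hρ0 hτ hρτ
    rwa [hs_def, mul_inv_cancel_right₀ (by linarith)] at h
  have interpolation := integral_cube_rpow_interpolation (c := c) (a := a)
    hρ.continuous hρ0 ht0.le ht
  refine le_of_le_rpow_of_sq_le hI hW (by positivity) (by linarith) gagliardo ?_
  calc W ^ 2 ≤ (4 * s ^ 2 + 1) * ((∫ x in cube d c a, ρ x ^ (2 * s - 1)) * K) :=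
        sq_integral_cube_rpow_le hρ.continuous hρ0 hτ hτ0 hs1
    _ ≤ 7 * (M ^ (2 * t) * I ^ (1 - 2 * t) * K) := by gcongr
    _ = 7 * (M ^ (2 * t) * K) * I ^ (1 - 2 * t) := by ring

theorem gagliardoNirenberg_cube (hd : 1 ≤ d) (ha : 0 < a) (hρ : Differentiable ℝ ρ)
    (hρ0 : ∀ x, 0 ≤ ρ x) (hτ : Continuous τ) (hτ0 : ∀ x, 0 ≤ τ x)
    (hρτ : ∀ x i, |fderiv ℝ ρ x (Pi.single i 1)| ≤ 2 * (√(ρ x) * √(τ x))) :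
    ∫ x in cube d c a, ρ x ^ (1 + 2 / (d : ℝ)) ≤ 7 * ((∫ x in cube d c a, ρ x) ^ (2 / (d : ℝ)) *
      ((∫ x in cube d c a, τ x) + (∫ x in cube d c a, ρ x) / a ^ 2)) := by
  rcases hd.eq_or_lt with rfl | hd
  · have hM : 0 ≤ ∫ x in cube 1 c a, ρ x := integral_nonneg hρ0
    have hT : 0 ≤ ∫ x in cube 1 c a, τ x := integral_nonneg hτ0
    have h := gagliardoNirenberg_cube_one (c := c) ha hρ hρ0 hτ hτ0 hρτ
    rw [show 1 + 2 / ((1 : ℕ) : ℝ) = (3 : ℕ) by norm_num,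
      show 2 / ((1 : ℕ) : ℝ) = (2 : ℕ) by norm_num]
    simp only [Real.rpow_natCast]
    exact h.trans (by gcongr; norm_num)
  · exact gagliardoNirenberg_cube_of_two_le hd ha hρ hρ0 hτ hτ0 hρτ

end GagliardoNirenberg

section Slice

variable {E X G : Type*} [TopologicalSpace E] [TopologicalSpace X] [NormedAddCommGroup G]
  {f : E × X → G}

lemma hasCompactSupport_slice [R1Space X] (hf : HasCompactSupport f) (y : E) :
    HasCompactSupport fun x => f (y, x) :=
  .intro (hf.isCompact.image continuous_snd) fun x hx => by
    by_contra h
    exact hx ⟨(y, x), subset_tsupport f h, rfl⟩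

variable [MeasurableSpace X] {μ : Measure X} [IsFiniteMeasureOnCompacts μ]

lemma integrable_slice [R1Space X] [OpensMeasurableSpace X] (hf : Continuous f)
    (hf_supp : HasCompactSupport f) (y : E) : Integrable (fun x => f (y, x)) μ :=
  (hf.comp (.prodMk_right y)).integrable_of_hasCompactSupport (hasCompactSupport_slice hf_supp y)

lemma continuous_integral_slice [NormedSpace ℝ G] [OpensMeasurableSpace X] (hf : Continuous f)
    (hf_supp : HasCompactSupport f) : Continuous fun y => ∫ x, f (y, x) ∂μ := by
  rw [← continuousOn_univ]
  refine continuousOn_integral_of_compact_support (hf_supp.isCompact.image continuous_snd)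
    hf.continuousOn fun y x _ hx => ?_
  by_contra h
  exact hx ⟨(y, x), subset_tsupport f h, rfl⟩

lemma exists_integrable_norm_slice_le [T2Space X] [OpensMeasurableSpace X] (hf : Continuous f)
    (hf_supp : HasCompactSupport f) :
    ∃ B : X → ℝ, Integrable B μ ∧ ∀ y x, ‖f (y, x)‖ ≤ B x := by
  obtain ⟨C, hC⟩ := hf_supp.exists_bound_of_continuous hf
  have hK : IsCompact (Prod.snd '' tsupport f) := hf_supp.isCompact.image continuous_snd
  refine ⟨(Prod.snd '' tsupport f).indicator fun _ => C,
    (integrable_indicator_iff hK.measurableSet).2 (integrableOn_const hK.measure_lt_top.ne),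
    fun y x => ?_⟩
  by_cases hx : x ∈ Prod.snd '' tsupport f
  · rw [Set.indicator_of_mem hx]
    exact hC (y, x)
  · rw [Set.indicator_of_notMem hx, norm_le_zero_iff]
    by_contra h
    exact hx ⟨(y, x), subset_tsupport f h, rfl⟩

end Slice

section FDerivSlice

variable {E X : Type*} [NormedAddCommGroup E] [NormedSpace ℝ E] [NormedAddCommGroup X]
  [NormedSpace ℝ X] {G : Type*} [NormedAddCommGroup G] [NormedSpace ℝ G] {f : E × X → G}

lemma continuous_fderiv_comp_inl (hf : ContDiff ℝ 1 f) :
    Continuous fun z => (fderiv ℝ f z).comp (ContinuousLinearMap.inl ℝ E X) :=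
  (hf.continuous_fderiv one_ne_zero).clm_comp_const _

lemma hasCompactSupport_fderiv_comp_inl (hf_supp : HasCompactSupport f) :
    HasCompactSupport fun z => (fderiv ℝ f z).comp (ContinuousLinearMap.inl ℝ E X) :=
  (hf_supp.fderiv ℝ).comp_left (g := fun L : E × X →L[ℝ] G => L.comp (.inl ℝ E X))
    (ContinuousLinearMap.zero_comp _)

variable [MeasurableSpace X] [OpensMeasurableSpace X] {μ : Measure X}
  [IsFiniteMeasureOnCompacts μ]

lemma hasFDerivAt_integral_slice (hf : ContDiff ℝ 1 f) (hf_supp : HasCompactSupport f) (y : E) :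
    HasFDerivAt (fun z => ∫ x, f (z, x) ∂μ) (∫ x, (fderiv ℝ f (y, x)).comp (.inl ℝ E X) ∂μ) y := by
  have hD := continuous_fderiv_comp_inl hf
  have hD_supp := hasCompactSupport_fderiv_comp_inl hf_supp
  obtain ⟨B, hB, hDB⟩ := exists_integrable_norm_slice_le (μ := μ) hD hD_supp
  exact hasFDerivAt_integral_of_dominated_of_fderiv_le Filter.univ_mem
    (.of_forall fun z => (integrable_slice hf.continuous hf_supp z).aestronglyMeasurable)
    (integrable_slice hf.continuous hf_supp y)
    (integrable_slice hD hD_supp y).aestronglyMeasurable (.of_forall fun x z _ => hDB z x) hB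
    (.of_forall fun x z _ => (hf.differentiable one_ne_zero (z, x)).hasFDerivAt.comp z
      (hasFDerivAt_prodMk_left z x))

lemma fderiv_integral_slice_apply (hf : ContDiff ℝ 1 f) (hf_supp : HasCompactSupport f)
    (y v : E) :
    fderiv ℝ (fun z => ∫ x, f (z, x) ∂μ) y v = ∫ x, fderiv ℝ f (y, x) (v, 0) ∂μ := by
  rw [(hasFDerivAt_integral_slice hf hf_supp y).fderiv, ContinuousLinearMap.integral_apply
    (integrable_slice (continuous_fderiv_comp_inl hf) (hasCompactSupport_fderiv_comp_inl hf_supp)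
      y)]
  simp only [ContinuousLinearMap.comp_apply, ContinuousLinearMap.inl_apply]

end FDerivSlice

section HoffmannOstenhof

lemma hasCompactSupport_norm_sq {Z F : Type*} [TopologicalSpace Z] [NormedAddCommGroup F]
    {g : Z → F} (hg : HasCompactSupport g) : HasCompactSupport fun z => ‖g z‖ ^ 2 :=
  hg.comp_left (g := fun u => ‖u‖ ^ 2) (by rw [norm_zero, zero_pow two_ne_zero])

lemma continuous_norm_sq_fderiv_apply {Z F : Type*} [NormedAddCommGroup Z] [NormedSpace ℝ Z]
    [NormedAddCommGroup F] [NormedSpace ℝ F] {g : Z → F} (hg : ContDiff ℝ 1 g) (v : Z) :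
    Continuous fun z => ‖fderiv ℝ g z v‖ ^ 2 :=
  ((hg.continuous_fderiv one_ne_zero).clm_apply continuous_const).norm.pow 2

variable {E X F : Type*} [NormedAddCommGroup E] [NormedSpace ℝ E] [NormedAddCommGroup X]
  [NormedSpace ℝ X] [NormedAddCommGroup F] [InnerProductSpace ℝ F] {f : E × X → F}

lemma abs_fderiv_integral_norm_sq_slice_le [MeasurableSpace X] [OpensMeasurableSpace X]
    {μ : Measure X} [IsFiniteMeasureOnCompacts μ] (hf : ContDiff ℝ 1 f)
    (hf_supp : HasCompactSupport f) (y v : E) :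
    |fderiv ℝ (fun z => ∫ x, ‖f (z, x)‖ ^ 2 ∂μ) y v| ≤
      2 * (√(∫ x, ‖f (y, x)‖ ^ 2 ∂μ) * √(∫ x, ‖fderiv ℝ f (y, x) (v, 0)‖ ^ 2 ∂μ)) := by
  have hderiv : fderiv ℝ (fun z => ∫ x, ‖f (z, x)‖ ^ 2 ∂μ) y v =
      2 * ∫ x, inner ℝ (f (y, x)) (fderiv ℝ f (y, x) (v, 0)) ∂μ := by
    rw [fderiv_integral_slice_apply (hf.norm_sq ℝ) (hasCompactSupport_norm_sq hf_supp),
      ← integral_const_mul]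
    refine integral_congr_ae (.of_forall fun x => ?_)
    simp only [(hf.differentiable one_ne_zero (y, x)).hasFDerivAt.norm_sq.fderiv, two_smul,
      two_mul, add_apply, ContinuousLinearMap.comp_apply, innerSL_apply_apply]
  have hf_sq : Continuous fun z => ‖f z‖ ^ 2 := hf.continuous.norm.pow 2
  rw [hderiv, abs_mul, abs_two,
    ← Real.sqrt_mul (integral_nonneg fun x => sq_nonneg ‖f (y, x)‖)]
  refine mul_le_mul_of_nonneg_left (Real.abs_le_sqrt (sq_integral_le_mul_integral
    (integrable_slice hf_sq (hasCompactSupport_norm_sq hf_supp) y)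
    (integrable_slice (continuous_norm_sq_fderiv_apply hf (v, 0))
      (hasCompactSupport_norm_sq (hf_supp.fderiv_apply ℝ (v, 0))) y)
    (fun _ => sq_nonneg _) (fun _ => sq_nonneg _) fun x => ?_)) zero_le_two
  rw [← mul_pow]
  exact sq_le_sq.2 ((abs_real_inner_le_norm _ _).trans (le_abs_self _))

end HoffmannOstenhof

section InsertAt

variable {ι : Type*} [DecidableEq ι] (Y : Type*)

/-- Insertion of a particle `y` at the index `j` of a configuration `x'` of the other particles,
that is `(y, x') ↦ (x_1, …, x_{j-1}, y, x_{j+1}, …)`, as a continuous linear equivalence. It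
separates the variable of the one-body density from those that are integrated out. -/
def insertAt [NormedAddCommGroup Y] [NormedSpace ℝ Y] (j : ι) :
    (Y × ({k // k ≠ j} → Y)) ≃L[ℝ] (ι → Y) where
  toFun z k := if h : k = j then z.1 else z.2 ⟨k, h⟩
  invFun x := (x j, fun k => x k)
  left_inv z := Prod.ext (dif_pos rfl) (funext fun k => dif_neg k.2)
  right_inv x := funext fun k => by
    by_cases h : k = j <;> simp only [h, dite_true, dite_false]
  map_add' z w := funext fun k => by
    by_cases h : k = j <;> simp only [h, dite_true, dite_false, Pi.add_apply, Prod.fst_add,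
      Prod.snd_add]
  map_smul' t z := funext fun k => by
    by_cases h : k = j <;> simp only [h, dite_true, dite_false, Pi.smul_apply, Prod.smul_fst,
      Prod.smul_snd, RingHom.id_apply]
  continuous_toFun := continuous_pi fun k => by
    by_cases h : k = j <;> simp only [h, dite_true, dite_false] <;> fun_prop
  continuous_invFun := by fun_prop

variable {Y} [NormedAddCommGroup Y] [NormedSpace ℝ Y]

lemma insertAt_apply_self (j : ι) (y : Y) (x' : {k // k ≠ j} → Y) :
    insertAt Y j (y, x') j = y :=
  dif_pos rfl

lemma insertAt_zero_right (j : ι) (v : Y) : insertAt Y j (v, 0) = Pi.single j v := by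
  ext k
  by_cases h : k = j
  · subst h
    rw [insertAt_apply_self, Pi.single_eq_same]
  · rw [Pi.single_eq_of_ne h]
    exact dif_neg h

lemma fderiv_comp_insertAt [Finite ι] {F : Type*} [NormedAddCommGroup F] [NormedSpace ℝ F]
    (f : (ι → Y) → F) (j : ι) (z : Y × ({k // k ≠ j} → Y)) (v : Y) :
    fderiv ℝ (f ∘ insertAt Y j) z (v, 0) = fderiv ℝ f (insertAt Y j z) (Pi.single j v) := by
  have := Fintype.ofFinite ι
  rw [ContinuousLinearEquiv.comp_right_fderiv, ContinuousLinearMap.comp_apply,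
    ContinuousLinearEquiv.coe_coe, insertAt_zero_right]

lemma hasCompactSupport_comp_insertAt {F : Type*} [Zero F] {f : (ι → Y) → F}
    (hf : HasCompactSupport f) (j : ι) : HasCompactSupport (f ∘ insertAt Y j) :=
  hf.comp_homeomorph (insertAt Y j).toHomeomorph

variable [Fintype ι]

lemma contDiff_comp_insertAt {F : Type*} [NormedAddCommGroup F] [NormedSpace ℝ F]
    {n : WithTop ℕ∞} {f : (ι → Y) → F} (hf : ContDiff ℝ n f) (j : ι) :
    ContDiff ℝ n (f ∘ insertAt Y j) :=
  hf.comp (insertAt Y j).contDiff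

lemma measurePreserving_insertAt [MeasureSpace Y] [SigmaFinite (volume : Measure Y)] (j : ι) :
    MeasurePreserving (insertAt Y j) := by
  let : Fintype {k // k = j} := Subtype.fintype fun k => k = j
  have singleton : MeasurePreserving (MeasurableEquiv.funUnique {k // k = j} Y) volume volume := by
    convert volume_preserving_funUnique {k // k = j} Y
  exact ((volume_preserving_piEquivPiSubtypeProd (fun _ => Y) fun k => k = j).symm _).comp
    ((singleton.symm _).prod (.id _))

lemma integral_indicator_apply_eq_setIntegral_insertAt [MeasureSpace Y] [BorelSpace Y]
    [SecondCountableTopology Y] [SigmaFinite (volume : Measure Y)] {E : Type*}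
    [NormedAddCommGroup E] [NormedSpace ℝ E] (j : ι) {G : (ι → Y) → E} (hG : Integrable G)
    {Q : Set Y} (hQ : MeasurableSet Q) :
    ∫ x, Q.indicator (fun _ => G x) (x j) = ∫ y in Q, ∫ x', G (insertAt Y j (y, x')) := by
  have hmp : MeasurePreserving (insertAt Y j) := measurePreserving_insertAt j
  have hemb : MeasurableEmbedding (insertAt Y j) :=
    (insertAt Y j).toHomeomorph.measurableEmbedding
  have hGQ : Integrable fun x => Q.indicator (fun _ => G x) (x j) :=
    hG.indicator (measurable_pi_apply j hQ)
  have hGQ' := (hmp.integrable_comp_emb hemb).2 hGQ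
  rw [← hmp.integral_comp hemb, ← integral_indicator hQ]
  rw [Measure.volume_eq_prod] at hGQ' ⊢
  refine (integral_prod _ hGQ').trans (integral_congr_ae (.of_forall fun y => ?_))
  by_cases hy : y ∈ Q
  · simp only [Function.comp_apply, insertAt_apply_self, Set.indicator_of_mem hy]
  · simp only [Function.comp_apply, insertAt_apply_self, Set.indicator_of_notMem hy, integral_zero]

lemma differentiableAt_integral_norm_sq_insertAt {κ F : Type*} [Fintype κ]
    [NormedAddCommGroup F] [InnerProductSpace ℝ F] {Ψ : (ι → κ → ℝ) → F} (hΨ : ContDiff ℝ 1 Ψ)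
    (hΨ_supp : HasCompactSupport Ψ) (j : ι) (y : κ → ℝ) :
    DifferentiableAt ℝ (fun z => ∫ x', ‖(Ψ ∘ insertAt (κ → ℝ) j) (z, x')‖ ^ 2) y :=
  (hasFDerivAt_integral_slice ((contDiff_comp_insertAt hΨ j).norm_sq ℝ)
    (hasCompactSupport_norm_sq (hasCompactSupport_comp_insertAt hΨ_supp j)) y).differentiableAt

end InsertAt

section GradNormSq

/-- The squared norm `‖∇_{x_j} Ψ(x)‖²` of the gradient in the coordinates of the `j`-th
particle. -/
noncomputable def gradNormSq {ι κ F : Type*} [Fintype ι] [DecidableEq ι] [Fintype κ]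
    [DecidableEq κ] [NormedAddCommGroup F] [NormedSpace ℝ F] (Ψ : (ι → κ → ℝ) → F) (j : ι)
    (x : ι → κ → ℝ) : ℝ :=
  ∑ p, ‖fderiv ℝ Ψ x (Pi.single j (Pi.single p 1))‖ ^ 2

variable {ι κ F : Type*} [Fintype ι] [DecidableEq ι] [Fintype κ] [DecidableEq κ]
  [NormedAddCommGroup F]

section

variable [NormedSpace ℝ F] {Ψ : (ι → κ → ℝ) → F}

lemma gradNormSq_nonneg (j : ι) (x : ι → κ → ℝ) : 0 ≤ gradNormSq Ψ j x :=
  Finset.sum_nonneg fun _ _ => sq_nonneg _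

lemma continuous_gradNormSq (hΨ : ContDiff ℝ 1 Ψ) (j : ι) : Continuous (gradNormSq Ψ j) :=
  continuous_finsetSum _ fun _ _ => continuous_norm_sq_fderiv_apply hΨ _

lemma hasCompactSupport_gradNormSq (hΨ_supp : HasCompactSupport Ψ) (j : ι) :
    HasCompactSupport (gradNormSq Ψ j) :=
  (hΨ_supp.fderiv ℝ).comp_left (g := fun L : (ι → κ → ℝ) →L[ℝ] F =>
    ∑ p, ‖L (Pi.single j (Pi.single p 1))‖ ^ 2) (by simp)

end

variable [InnerProductSpace ℝ F] {Ψ : (ι → κ → ℝ) → F}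

lemma abs_fderiv_integral_norm_sq_insertAt_le (hΨ : ContDiff ℝ 1 Ψ)
    (hΨ_supp : HasCompactSupport Ψ) (j : ι) (y : κ → ℝ) (p : κ) :
    |fderiv ℝ (fun z => ∫ x', ‖(Ψ ∘ insertAt (κ → ℝ) j) (z, x')‖ ^ 2) y (Pi.single p 1)| ≤
      2 * (√(∫ x', ‖(Ψ ∘ insertAt (κ → ℝ) j) (y, x')‖ ^ 2) *
        √(∫ x', gradNormSq Ψ j (insertAt (κ → ℝ) j (y, x')))) := by
  have hsplit : ContDiff ℝ 1 (Ψ ∘ insertAt (κ → ℝ) j) := contDiff_comp_insertAt hΨ j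
  have hsplit_supp : HasCompactSupport (Ψ ∘ insertAt (κ → ℝ) j) :=
    hasCompactSupport_comp_insertAt hΨ_supp j
  refine (abs_fderiv_integral_norm_sq_slice_le hsplit hsplit_supp y (Pi.single p 1)).trans ?_
  gcongr 2 * (_ * √?_)
  refine integral_mono
    (integrable_slice (continuous_norm_sq_fderiv_apply hsplit _)
      (hasCompactSupport_norm_sq (hsplit_supp.fderiv_apply ℝ _)) y)
    (integrable_slice ((continuous_gradNormSq hΨ j).comp (insertAt _ j).continuous)
      (hasCompactSupport_comp_insertAt (hasCompactSupport_gradNormSq hΨ_supp j) j) y)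
    fun x' => ?_
  simp only [fderiv_comp_insertAt]
  exact Finset.single_le_sum (f := fun p =>
    ‖fderiv ℝ Ψ (insertAt _ j (y, x')) (Pi.single j (Pi.single p 1))‖ ^ 2)
    (fun _ _ => sq_nonneg _) (Finset.mem_univ p)

end GradNormSq

section OneBody

/-- The one-body kinetic energy density of `Ψ`: the counterpart of `density`, with `|Ψ|²` replaced
by `‖∇_{x_j} Ψ‖²` in the `j`-th summand. -/
noncomputable def kineticDensity (d N : ℕ) (Ψ : (Fin N → Fin d → ℝ) → ℂ) (y : Fin d → ℝ) : ℝ :=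
  ∑ j, ∫ x', gradNormSq Ψ j (insertAt (Fin d → ℝ) j (y, x'))

variable {d N : ℕ} {Ψ : (Fin N → Fin d → ℝ) → ℂ}

lemma density_eq_sum_integral_insertAt : density d N Ψ =
    fun y => ∑ j, ∫ x', ‖(Ψ ∘ insertAt (Fin d → ℝ) j) (y, x')‖ ^ 2 :=
  rfl

lemma density_nonneg (y : Fin d → ℝ) : 0 ≤ density d N Ψ y :=
  Finset.sum_nonneg fun _ _ => integral_nonneg fun _ => sq_nonneg _

lemma kineticDensity_nonneg (y : Fin d → ℝ) : 0 ≤ kineticDensity d N Ψ y :=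
  Finset.sum_nonneg fun _ _ => integral_nonneg fun _ => gradNormSq_nonneg _ _

lemma continuous_kineticDensity (hΨ : ContDiff ℝ 1 Ψ) (hΨ_supp : HasCompactSupport Ψ) :
    Continuous (kineticDensity d N Ψ) :=
  continuous_finsetSum _ fun j _ =>
    continuous_integral_slice ((continuous_gradNormSq hΨ j).comp (insertAt _ j).continuous)
      (hasCompactSupport_comp_insertAt (hasCompactSupport_gradNormSq hΨ_supp j) j)

lemma differentiable_density (hΨ : ContDiff ℝ 1 Ψ) (hΨ_supp : HasCompactSupport Ψ) :
    Differentiable ℝ (density d N Ψ) := fun y => by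
  rw [density_eq_sum_integral_insertAt]
  exact .fun_sum fun j _ => differentiableAt_integral_norm_sq_insertAt hΨ hΨ_supp j y

lemma abs_fderiv_density_le (hΨ : ContDiff ℝ 1 Ψ) (hΨ_supp : HasCompactSupport Ψ)
    (y : Fin d → ℝ) (p : Fin d) :
    |fderiv ℝ (density d N Ψ) y (Pi.single p 1)| ≤
      2 * (√(density d N Ψ y) * √(kineticDensity d N Ψ y)) := by
  rw [density_eq_sum_integral_insertAt, fderiv_fun_sum fun j _ =>
    differentiableAt_integral_norm_sq_insertAt hΨ hΨ_supp j y, sum_apply]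
  refine (Finset.abs_sum_le_sum_abs _ _).trans ((Finset.sum_le_sum fun j _ =>
    abs_fderiv_integral_norm_sq_insertAt_le hΨ hΨ_supp j y p).trans ?_)
  rw [← Finset.mul_sum]
  exact mul_le_mul_of_nonneg_left (Real.sum_sqrt_mul_sqrt_le _
    (fun j => integral_nonneg fun _ => sq_nonneg _)
    (fun j => integral_nonneg fun _ => gradNormSq_nonneg _ _)) zero_le_two

lemma integral_sum_indicator_gradNormSq (hΨ : ContDiff ℝ 1 Ψ) (hΨ_supp : HasCompactSupport Ψ)
    {Q : Set (Fin d → ℝ)} (hQ : MeasurableSet Q) :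
    ∫ x, ∑ j, Q.indicator (fun _ => gradNormSq Ψ j x) (x j) =
      ∫ y in Q, kineticDensity d N Ψ y := by
  have hint j : Integrable (gradNormSq Ψ j) :=
    (continuous_gradNormSq hΨ j).integrable_of_hasCompactSupport
      (hasCompactSupport_gradNormSq hΨ_supp j)
  have hmarg j : Integrable fun y => ∫ x', gradNormSq Ψ j (insertAt (Fin d → ℝ) j (y, x')) :=
    ((measurePreserving_insertAt j).integrable_comp_emb
      (insertAt _ j).toHomeomorph.measurableEmbedding |>.2 (hint j)).integral_prod_left
  have hind j : Integrable fun x => Q.indicator (fun _ => gradNormSq Ψ j x) (x j) :=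
    (hint j).indicator (measurable_pi_apply j hQ)
  rw [integral_finsetSum _ fun j _ => hind j]
  simp only [integral_indicator_apply_eq_setIntegral_insertAt _ (hint _) hQ, kineticDensity]
  rw [integral_finsetSum _ fun j _ => (hmarg j).integrableOn]

end OneBody

lemma pow_rpow_div_natCast {a : ℝ} (ha : 0 ≤ a) {d : ℕ} (hd : d ≠ 0) (r : ℝ) :
    (a ^ d) ^ (r / (d : ℝ)) = a ^ r := by
  rw [← Real.rpow_natCast, ← Real.rpow_mul ha, mul_div_cancel₀ _ (Nat.cast_ne_zero.2 hd)]

theorem local_uncertainty_general {d N : ℕ} (hd : 1 ≤ d) {Ψ : (Fin N → Fin d → ℝ) → ℂ}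
    (hΨ : ContDiff ℝ 1 Ψ) (hΨ_supp : HasCompactSupport Ψ) (c : Fin d → ℝ) {a : ℝ} (ha : 0 < a) :
    7⁻¹ * (∫ y in cube d c a, density d N Ψ y ^ (1 + 2 / (d : ℝ))) /
        (∫ y in cube d c a, density d N Ψ y) ^ (2 / (d : ℝ)) -
      7 * (a ^ d) ^ (-(2 / (d : ℝ))) * (∫ y in cube d c a, density d N Ψ y) ≤
    ∫ x : Fin N → Fin d → ℝ, ∑ j : Fin N,
      (cube d c a).indicator
        (fun _ => ∑ p : Fin d, ‖fderiv ℝ Ψ x (Pi.single j (Pi.single p 1))‖ ^ 2) (x j) := by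
  have gagliardoNirenberg := gagliardoNirenberg_cube (c := c) hd ha
    (differentiable_density hΨ hΨ_supp) density_nonneg (continuous_kineticDensity hΨ hΨ_supp)
    kineticDensity_nonneg (abs_fderiv_density_le hΨ hΨ_supp)
  have hM : 0 ≤ ∫ y in cube d c a, density d N Ψ y := integral_nonneg density_nonneg
  have hT : 0 ≤ ∫ y in cube d c a, kineticDensity d N Ψ y := integral_nonneg kineticDensity_nonneg
  refine le_of_le_of_eq ?_
    (integral_sum_indicator_gradNormSq hΨ hΨ_supp (measurableSet_cube c a)).symm
  rw [Real.rpow_neg (by positivity), pow_rpow_div_natCast ha.le (Nat.one_le_iff_ne_zero.1 hd),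
    Real.rpow_two, sub_le_iff_le_add, mul_assoc, inv_mul_eq_div (a ^ 2)]
  refine div_le_of_le_mul₀ (Real.rpow_nonneg hM _) (by positivity) ?_
  calc 7⁻¹ * ∫ y in cube d c a, density d N Ψ y ^ (1 + 2 / (d : ℝ))
      ≤ (∫ y in cube d c a, density d N Ψ y) ^ (2 / (d : ℝ)) *
          ((∫ y in cube d c a, kineticDensity d N Ψ y) +
            (∫ y in cube d c a, density d N Ψ y) / a ^ 2) := by linarith
    _ ≤ ((∫ y in cube d c a, kineticDensity d N Ψ y) +
          7 * ((∫ y in cube d c a, density d N Ψ y) / a ^ 2)) *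
        (∫ y in cube d c a, density d N Ψ y) ^ (2 / (d : ℝ)) := by
      rw [mul_comm]
      gcongr
      exact le_mul_of_one_le_left (by positivity) (by norm_num)

/-- **Local uncertainty principle.**
There is a constant `C₁ > 0` depending only on `d` such that for every `L²`-normalized smooth
compactly supported `N`-body wave function `Ψ` and every cube `Q ⊆ ℝ^d`,
`∫ ∑_j 1_Q(x_j) ‖∇_j Ψ‖² dx ≥ C₁ (∫_Q ρ_Ψ^{1+2/d})/(∫_Q ρ_Ψ)^{2/d} − C₁⁻¹ |Q|^{-2/d} ∫_Q ρ_Ψ`. -/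
theorem local_uncertainty (d : ℕ) (hd : 1 ≤ d) :
    ∃ C₁ > (0 : ℝ), ∀ N : ℕ, 1 ≤ N →
      ∀ Ψ : (Fin N → Fin d → ℝ) → ℂ,
        ContDiff ℝ (⊤ : ℕ∞) Ψ → HasCompactSupport Ψ →
        (∫ x : Fin N → Fin d → ℝ, ‖Ψ x‖ ^ 2) = 1 →
        ∀ (c : Fin d → ℝ) (a : ℝ), 0 < a →
          C₁ * (∫ y in cube d c a, density d N Ψ y ^ (1 + 2 / (d : ℝ))) /
              (∫ y in cube d c a, density d N Ψ y) ^ (2 / (d : ℝ)) -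
            C₁⁻¹ * (a ^ d) ^ (-(2 / (d : ℝ))) * (∫ y in cube d c a, density d N Ψ y) ≤
          ∫ x : Fin N → Fin d → ℝ, ∑ j : Fin N,
            (cube d c a).indicator
              (fun _ => ∑ p : Fin d,
                ‖fderiv ℝ Ψ x (Pi.single j (Pi.single p 1))‖ ^ 2) (x j) :=
  ⟨7⁻¹, by norm_num, fun N _ Ψ hΨ hΨ_supp _ c a ha => by
    simpa only [inv_inv] using
      local_uncertainty_general hd (hΨ.of_le (mod_cast le_top)) hΨ_supp c ha⟩
end

section
/- (Artin's theorem, planar case.) For every N ≥ 1, the fundamental group of the unordered configuration space C_N(ℝ²) of N distinct points in the plane, based at any point, is isomorphic to the braid group B_N: for every X ∈ C_N(ℝ²) there exists a group isomorphism FundamentalGroup(C_N(ℝ²), X) ≃ B_N. -/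
open FreeGroup in
/-- The braid relations on generators `σ_0, …, σ_{n-1}` (0-indexed):
`σ_i σ_j = σ_j σ_i` for `|i - j| ≥ 2` and `σ_i σ_{i+1} σ_i = σ_{i+1} σ_i σ_{i+1}`. -/
def braidRels (n : ℕ) : Set (FreeGroup (Fin n)) :=
  { r | (∃ i j : Fin n, i.val + 2 ≤ j.val ∧
          r = of i * of j * (of i)⁻¹ * (of j)⁻¹) ∨
        (∃ i j : Fin n, i.val + 1 = j.val ∧
          r = of i * of j * of i * (of j * of i * of j)⁻¹) }

/-- The braid group on `N` strands, presented by the braid relations. -/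
abbrev BraidGroup (N : ℕ) : Type := PresentedGroup (braidRels (N - 1))

/-- The equivalence relation on injective tuples of `N` points of `ℝ^d` identifying tuples
that differ by a permutation of the labels. -/
def configSetoid (d N : ℕ) :
    Setoid {x : Fin N → Fin d → ℝ // Function.Injective x} where
  r x y := ∃ σ : Equiv.Perm (Fin N), y.1 = x.1 ∘ ⇑σ
  iseqv := by
    refine ⟨fun x => ⟨Equiv.refl _, rfl⟩, ?_, ?_⟩
    · rintro x y ⟨σ, h⟩
      exact ⟨σ.symm, by rw [h]; funext i; simp⟩
    · rintro x y z ⟨σ, h⟩ ⟨τ, h'⟩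
      exact ⟨τ.trans σ, by rw [h', h]; rfl⟩

/-- The unordered configuration space of `N` distinct points in `ℝ^d`, i.e. the quotient of
the space of injective `N`-tuples by the permutation action, with the quotient topology. -/
abbrev ConfigSpace (d N : ℕ) : Type := Quotient (configSetoid d N)

/-!
Regard a point `(p₀, p₁)` of the plane as a particle on the line with the position `p₀ + t * p₁` at
the time `t`. The configurations whose particles are at distinct positions at the time `t` form an
open set `U t`, identified with a convex set by listing the particles from left to right, and the
sets `U t` cover the configuration space and share a base point, where all particles are at rest.
On `U s ∩ U t` the permutation of the particles between the times `s` and `t` is locally constant,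
and each of its fibres is again convex.

The fundamental group is generated by the loops that reach a configuration inside one member of the
cover and return inside another one; these depend only on the permutation, and the permutations of
adjacent particles satisfy the braid relations. Hence the braid group maps onto the fundamental
group. Conversely, two particles meet at most once, so the lengths of the permutations add up over
consecutive periods of time, and by Matsumoto's theorem their lifts to the braid group form a
locally constant cocycle on the cover. Its monodromy is an inverse of the first map.
-/

namespace ArtinBraid

open Topology Set

/-! ### Lifting permutations along the braid relations -/

section Permutations

variable {n : ℕ}

/-- The transposition of `i` and `i + 1`, a Coxeter generator of the symmetric group. -/
def adjSwap (i : Fin n) : Equiv.Perm (Fin (n + 1)) := Equiv.swap i.castSucc i.succ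

@[simp]
theorem adjSwap_castSucc (i : Fin n) : adjSwap i i.castSucc = i.succ := by simp [adjSwap]

@[simp]
theorem adjSwap_succ (i : Fin n) : adjSwap i i.succ = i.castSucc := by simp [adjSwap]

@[simp]
theorem mul_adjSwap_mul_adjSwap (w : Equiv.Perm (Fin (n + 1))) (i : Fin n) :
    w * adjSwap i * adjSwap i = w := by
  simp [adjSwap, mul_assoc]

theorem adjSwap_comm {i j : Fin n} (hij : i.val + 2 ≤ j.val) :
    adjSwap i * adjSwap j = adjSwap j * adjSwap i := by
  refine (Equiv.Perm.disjoint_swap_swap ?_).commute.eq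
  simp only [List.nodup_cons, List.mem_cons, Fin.ext_iff, Fin.val_castSucc, Fin.val_succ]
  grind

theorem castSucc_eq_succ_of_val_add_one_eq {i j : Fin n} (hij : i.val + 1 = j.val) :
    j.castSucc = i.succ :=
  Fin.ext hij.symm

theorem adjSwap_braid {i j : Fin n} (hij : i.val + 1 = j.val) :
    adjSwap i * adjSwap j * adjSwap i = adjSwap j * adjSwap i * adjSwap j := by
  have h₁ : i.succ ≠ i.castSucc := Fin.castSucc_lt_succ.ne'
  have h₂ : i.succ ≠ j.succ := by grind
  have h₃ : j.succ ≠ i.castSucc := by grind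
  have left := Equiv.swap_mul_swap_mul_swap h₂.symm h₃
  have right := Equiv.swap_mul_swap_mul_swap h₁.symm h₃.symm
  rw [Equiv.swap_comm j.succ, Equiv.swap_comm i.succ i.castSucc, Equiv.swap_comm i.castSucc j.succ]
    at left
  simpa only [adjSwap, castSucc_eq_succ_of_val_add_one_eq hij] using left.trans right.symm

theorem adjSwap_lt_adjSwap {i : Fin n} {a b : Fin (n + 1)} (hab : a < b)
    (hne : ¬(a = i.castSucc ∧ b = i.succ)) : adjSwap i a < adjSwap i b := by
  grind [adjSwap]

theorem toLex_mul_adjSwap_lt {w : Equiv.Perm (Fin (n + 1))} {i : Fin n}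
    (hi : w i.succ < w i.castSucc) : toLex ⇑(w * adjSwap i) < toLex ⇑w :=
  Pi.lex_desc Fin.castSucc_lt_succ.le hi

theorem eq_one_of_forall_castSucc_le_succ {w : Equiv.Perm (Fin (n + 1))}
    (h : ∀ i : Fin n, w i.castSucc ≤ w i.succ) : w = 1 :=
  (Equiv.Perm.monotone_iff w).mp (Fin.monotone_iff_le_succ.mpr h)

@[elab_as_elim]
theorem perm_ascent_induction {P : Equiv.Perm (Fin (n + 1)) → Prop} (one : P 1)
    (mul_adjSwap : ∀ w i, w (Fin.castSucc i) < w (Fin.succ i) → P w → P (w * adjSwap i))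
    (w : Equiv.Perm (Fin (n + 1))) : P w := by
  by_cases h : ∀ i : Fin n, w i.castSucc ≤ w i.succ
  · rwa [eq_one_of_forall_castSucc_le_succ h]
  · push Not at h
    obtain ⟨i, hi⟩ := h
    simpa using mul_adjSwap (w * adjSwap i) i (by simpa using hi)
      (perm_ascent_induction one mul_adjSwap _)
termination_by wellFounded_lt.wrap (toLex ⇑w)
decreasing_by exact toLex_mul_adjSwap_lt hi

end Permutations

section BraidFamily

variable {n : ℕ} {G : Type*} [Group G] {σ : Fin n → G}

/-- A family of group elements satisfying Artin's braid relations, that is, the images of the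
generators under a homomorphism from the braid group. -/
structure IsBraidFamily (σ : Fin n → G) : Prop where
  comm : ∀ i j : Fin n, i.val + 2 ≤ j.val → σ i * σ j = σ j * σ i
  braid : ∀ i j : Fin n, i.val + 1 = j.val → σ i * σ j * σ i = σ j * σ i * σ j

theorem isBraidFamily_of (n : ℕ) :
    IsBraidFamily (PresentedGroup.of : Fin n → PresentedGroup (braidRels n)) where
  comm i j hij :=
    PresentedGroup.mk_eq_mk_of_mul_inv_mem (Or.inl ⟨i, j, hij, by group⟩)
  braid i j hij := PresentedGroup.mk_eq_mk_of_mul_inv_mem (Or.inr ⟨i, j, hij, rfl⟩)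

theorem IsBraidFamily.lift_eq_one (hσ : IsBraidFamily σ) :
    ∀ r ∈ braidRels n, FreeGroup.lift σ r = 1 := by
  rintro r (⟨i, j, hij, rfl⟩ | ⟨i, j, hij, rfl⟩)
  · simp [hσ.comm i j hij]
  · simp only [map_mul, map_inv, FreeGroup.lift_apply_of, hσ.braid i j hij, mul_inv_cancel]

/-- The homomorphism from the braid group that sends the generators to a given braid family. -/
def IsBraidFamily.lift (hσ : IsBraidFamily σ) : PresentedGroup (braidRels n) →* G :=
  PresentedGroup.toGroup hσ.lift_eq_one

@[simp]
theorem IsBraidFamily.lift_of (hσ : IsBraidFamily σ) (i : Fin n) :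
    hσ.lift (PresentedGroup.of i) = σ i :=
  PresentedGroup.toGroup.of _

theorem isBraidFamily_of_mul_adjSwap {A : Equiv.Perm (Fin (n + 1)) → G}
    (mul : ∀ w i, w (Fin.castSucc i) < w (Fin.succ i) →
      A (w * adjSwap i) = A w * A (adjSwap i)) :
    IsBraidFamily fun i => A (adjSwap i) where
  comm i j hij := by
    rw [← mul _ _ ?_, ← mul _ _ ?_, adjSwap_comm hij]
    all_goals exact adjSwap_lt_adjSwap Fin.castSucc_lt_succ (by grind)
  braid i j hij := by
    rw [← mul (adjSwap i) j, ← mul (adjSwap i * adjSwap j) i, ← mul (adjSwap j) i,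
      ← mul (adjSwap j * adjSwap i) j, adjSwap_braid hij]
    all_goals grind [adjSwap, Equiv.Perm.mul_apply]

end BraidFamily

section MatsumotoLift

variable {n : ℕ} {G : Type*} [Group G]

open Classical in
/-- The element of `G` obtained by replacing every adjacent transposition in a reduced word of the
permutation `w` by its image under `σ`. The word is found by repeatedly choosing a descent; if `σ`
is a braid family, then the result does not depend on the choices. -/
noncomputable def matsumotoLift (σ : Fin n → G) (w : Equiv.Perm (Fin (n + 1))) : G :=
  if h : ∃ i : Fin n, w i.succ < w i.castSucc then
    matsumotoLift σ (w * adjSwap h.choose) * σ h.choose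
  else 1
termination_by wellFounded_lt.wrap (toLex ⇑w)
decreasing_by exact toLex_mul_adjSwap_lt h.choose_spec

@[simp]
theorem matsumotoLift_one (σ : Fin n → G) : matsumotoLift σ 1 = 1 := by
  rw [matsumotoLift, dif_neg]
  rintro ⟨i, hi⟩
  exact hi.not_gt Fin.castSucc_lt_succ

variable {σ : Fin n → G}

theorem matsumotoLift_mul_far {w : Equiv.Perm (Fin (n + 1))} (hσ : IsBraidFamily σ)
    (rule : ∀ v : Equiv.Perm (Fin (n + 1)), toLex ⇑v < toLex ⇑w → ∀ i, v (Fin.succ i) <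
      v (Fin.castSucc i) → matsumotoLift σ v = matsumotoLift σ (v * adjSwap i) * σ i)
    {i j : Fin n} (hij : i.val + 2 ≤ j.val) (hi : w i.succ < w i.castSucc)
    (hj : w j.succ < w j.castSucc) :
    matsumotoLift σ (w * adjSwap j) * σ j = matsumotoLift σ (w * adjSwap i) * σ i := by
  have hi' : (w * adjSwap j) i.succ < (w * adjSwap j) i.castSucc := by
    grind -linarith [adjSwap, Equiv.Perm.mul_apply]
  have hj' : (w * adjSwap i) j.succ < (w * adjSwap i) j.castSucc := by
    grind -linarith [adjSwap, Equiv.Perm.mul_apply]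
  rw [rule _ (toLex_mul_adjSwap_lt hj) i hi', rule _ (toLex_mul_adjSwap_lt hi) j hj',
    mul_assoc, hσ.comm i j hij, mul_assoc w, ← adjSwap_comm hij]
  simp only [mul_assoc]

theorem matsumotoLift_mul_near {w : Equiv.Perm (Fin (n + 1))} (hσ : IsBraidFamily σ)
    (rule : ∀ v : Equiv.Perm (Fin (n + 1)), toLex ⇑v < toLex ⇑w → ∀ i, v (Fin.succ i) <
      v (Fin.castSucc i) → matsumotoLift σ v = matsumotoLift σ (v * adjSwap i) * σ i)
    {i j : Fin n} (hij : i.val + 1 = j.val) (hi : w i.succ < w i.castSucc)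
    (hj : w j.succ < w j.castSucc) :
    matsumotoLift σ (w * adjSwap j) * σ j = matsumotoLift σ (w * adjSwap i) * σ i := by
  have hi₁ : (w * adjSwap j) i.succ < (w * adjSwap j) i.castSucc := by
    grind -linarith [adjSwap, Equiv.Perm.mul_apply]
  have hj₁ : (w * adjSwap i) j.succ < (w * adjSwap i) j.castSucc := by
    grind -linarith [adjSwap, Equiv.Perm.mul_apply]
  have hj₂ : (w * adjSwap j * adjSwap i) j.succ < (w * adjSwap j * adjSwap i) j.castSucc := by
    grind -linarith [adjSwap, Equiv.Perm.mul_apply]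
  have hi₂ : (w * adjSwap i * adjSwap j) i.succ < (w * adjSwap i * adjSwap j) i.castSucc := by
    grind -linarith [adjSwap, Equiv.Perm.mul_apply]
  have lt_i := toLex_mul_adjSwap_lt hi
  have lt_j := toLex_mul_adjSwap_lt hj
  calc matsumotoLift σ (w * adjSwap j) * σ j
      = matsumotoLift σ (w * (adjSwap j * adjSwap i * adjSwap j)) * (σ j * σ i * σ j) := by
        rw [rule _ lt_j i hi₁, rule _ ((toLex_mul_adjSwap_lt hi₁).trans lt_j) j hj₂]
        simp only [mul_assoc]
    _ = matsumotoLift σ (w * (adjSwap i * adjSwap j * adjSwap i)) * (σ i * σ j * σ i) := by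
        rw [adjSwap_braid hij, hσ.braid i j hij]
    _ = matsumotoLift σ (w * adjSwap i) * σ i := by
        rw [rule _ lt_i j hj₁, rule _ ((toLex_mul_adjSwap_lt hj₁).trans lt_i) i hi₂]
        simp only [mul_assoc]

theorem matsumotoLift_of_succ_lt_castSucc (hσ : IsBraidFamily σ) (w : Equiv.Perm (Fin (n + 1)))
    (i : Fin n) (hi : w i.succ < w i.castSucc) :
    matsumotoLift σ w = matsumotoLift σ (w * adjSwap i) * σ i := by
  have rule : ∀ v : Equiv.Perm (Fin (n + 1)), toLex ⇑v < toLex ⇑w → ∀ i, v (Fin.succ i) <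
      v (Fin.castSucc i) → matsumotoLift σ v = matsumotoLift σ (v * adjSwap i) * σ i :=
    fun v _ i hi => matsumotoLift_of_succ_lt_castSucc hσ v i hi
  have descent : ∃ i : Fin n, w i.succ < w i.castSucc := ⟨i, hi⟩
  have hj := descent.choose_spec
  rw [matsumotoLift, dif_pos descent]
  generalize descent.choose = j at hj
  have cases : i = j ∨ i.val + 2 ≤ j.val ∨ i.val + 1 = j.val ∨ j.val + 2 ≤ i.val ∨
      j.val + 1 = i.val := by omega
  obtain rfl | h | h | h | h := cases
  · rfl
  · exact matsumotoLift_mul_far hσ rule h hi hj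
  · exact matsumotoLift_mul_near hσ rule h hi hj
  · exact (matsumotoLift_mul_far hσ rule h hj hi).symm
  · exact (matsumotoLift_mul_near hσ rule h hj hi).symm
termination_by wellFounded_lt.wrap (toLex ⇑w)

theorem matsumotoLift_mul_adjSwap (hσ : IsBraidFamily σ) {w : Equiv.Perm (Fin (n + 1))}
    {i : Fin n} (hi : w i.castSucc < w i.succ) :
    matsumotoLift σ (w * adjSwap i) = matsumotoLift σ w * σ i := by
  rw [matsumotoLift_of_succ_lt_castSucc hσ (w * adjSwap i) i (by simpa using hi),
    mul_adjSwap_mul_adjSwap]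

@[simp]
theorem matsumotoLift_adjSwap (hσ : IsBraidFamily σ) (i : Fin n) :
    matsumotoLift σ (adjSwap i) = σ i := by
  simpa using matsumotoLift_mul_adjSwap hσ (w := 1) (i := i) Fin.castSucc_lt_succ

/- The hypothesis says that every inversion of `w` remains one of `v * w`, that is, that the lengths
of `v` and `w` add up. -/
theorem matsumotoLift_mul (hσ : IsBraidFamily σ) (v w : Equiv.Perm (Fin (n + 1)))
    (h : ∀ a b, a < b → w b < w a → v (w b) < v (w a)) :
    matsumotoLift σ (v * w) = matsumotoLift σ v * matsumotoLift σ w := by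
  induction w using perm_ascent_induction with
  | one => simp
  | mul_adjSwap w i hi ih =>
    have hvi : (v * w) i.castSucc < (v * w) i.succ := by
      simpa using h i.castSucc i.succ Fin.castSucc_lt_succ (by simpa using hi)
    have hw : ∀ a b, a < b → w b < w a → v (w b) < v (w a) := by
      intro a b hab hba
      have hne : ¬(a = i.castSucc ∧ b = i.succ) := by
        rintro ⟨rfl, rfl⟩
        exact hi.not_gt hba
      simpa [adjSwap] using h _ _ (adjSwap_lt_adjSwap hab hne) (by simpa [adjSwap] using hba)
    rw [← mul_assoc, matsumotoLift_mul_adjSwap hσ hvi, matsumotoLift_mul_adjSwap hσ hi, ih hw,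
      mul_assoc]

end MatsumotoLift

/-! ### Covers by simply connected sets sharing a base point -/

section SimplyConnected

variable {X : Type*} [TopologicalSpace X]

theorem pathClass_induction_of_openCover {ι : Type*} {U : ι → Set X} (isOpen : ∀ i, IsOpen (U i))
    (iUnion_eq : ⋃ i, U i = univ) {P : ∀ x y : X, Path.Homotopic.Quotient x y → Prop}
    (mk : ∀ i x y (γ : Path x y), (∀ t, γ t ∈ U i) → P x y (.mk γ))
    (trans : ∀ x y z p q, P x y p → P y z q → P x z (p.trans q))
    {x y : X} (p : Path.Homotopic.Quotient x y) : P x y p := by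
  induction p using Path.Homotopic.Quotient.ind with | mk γ => ?_
  obtain ⟨t, t_zero, t_mono, ⟨n, t_eq_one⟩, t_mem⟩ :=
    exists_monotone_Icc_subset_open_cover_unitInterval (c := fun i => γ ⁻¹' U i)
      (fun i => (isOpen i).preimage γ.continuous) (by simp [← preimage_iUnion, iUnion_eq])
  have subpath (m : ℕ) : P _ _ (.mk (γ.subpath (t 0) (t m))) := by
    induction m with
    | zero =>
      obtain ⟨i, hi⟩ := iUnion_eq_univ_iff.mp iUnion_eq (γ (t 0))
      exact mk i _ _ _ fun s => by simpa using hi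
    | succ m ih =>
      obtain ⟨i, hi⟩ := t_mem m
      have hstep : ∀ s, γ.subpath (t m) (t (m + 1)) s ∈ U i := by
        rw [← range_subset_iff, Path.range_subpath_of_le _ _ _ (t_mono m.le_succ)]
        exact image_subset_iff.mpr hi
      have hsplit := trans _ _ _ _ _ ih (mk i _ _ _ hstep)
      rwa [← Path.Homotopic.Quotient.mk_trans, Path.Homotopic.Quotient.eq.mpr
        ⟨Path.Homotopy.subpathTransSubpath γ _ _ _⟩] at hsplit
  have cast : ∀ x' y' (hx : x' = x) (hy : y' = y),
      P x' y' (.mk (γ.cast hx hy)) → P x y (.mk γ) := by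
    rintro _ _ rfl rfl h
    exact h
  refine cast _ _ γ.source γ.target ?_
  have whole := subpath n
  rwa [t_zero, t_eq_one n le_rfl, Path.subpath_zero_one] at whole

variable {s : Set X}

/-- The class of the paths from `x` to `y` inside a simply connected set, viewed as a homotopy class
in the ambient space. -/
noncomputable def arcIn (hs : IsSimplyConnected s) {x y : X} (hx : x ∈ s) (hy : y ∈ s) :
    Path.Homotopic.Quotient x y :=
  haveI := hs.simplyConnectedSpace
  .mk ((PathConnectedSpace.somePath (⟨x, hx⟩ : s) ⟨y, hy⟩).map continuous_subtype_val)

theorem mk_eq_arcIn (hs : IsSimplyConnected s) {x y : X} (γ : Path x y) (hγ : ∀ t, γ t ∈ s)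
    (hx : x ∈ s) (hy : y ∈ s) : Path.Homotopic.Quotient.mk γ = arcIn hs hx hy := by
  have := hs.simplyConnectedSpace
  let δ : Path (⟨x, hx⟩ : s) ⟨y, hy⟩ :=
    { toFun := fun t => ⟨γ t, hγ t⟩
      source' := Subtype.ext γ.source
      target' := Subtype.ext γ.target }
  exact Path.Homotopic.Quotient.eq.mpr
    ((SimplyConnectedSpace.paths_homotopic δ _).map ⟨Subtype.val, continuous_subtype_val⟩)

theorem exists_mk_eq_arcIn (hs : IsSimplyConnected s) {x y : X} (hx : x ∈ s) (hy : y ∈ s) :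
    ∃ γ : Path x y, (∀ t, γ t ∈ s) ∧ .mk γ = arcIn hs hx hy := by
  obtain ⟨γ, hγ⟩ := hs.isPathConnected.joinedIn x hx y hy
  exact ⟨γ, hγ, mk_eq_arcIn hs γ hγ hx hy⟩

@[simp]
theorem arcIn_self (hs : IsSimplyConnected s) {x : X} (hx : x ∈ s) :
    arcIn hs hx hx = .refl x :=
  (mk_eq_arcIn hs (.refl x) (fun _ => hx) hx hx).symm

@[simp]
theorem arcIn_trans_arcIn (hs : IsSimplyConnected s) {x y z : X} (hx : x ∈ s) (hy : y ∈ s)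
    (hz : z ∈ s) : (arcIn hs hx hy).trans (arcIn hs hy hz) = arcIn hs hx hz := by
  obtain ⟨γ, hγ, hγ'⟩ := exists_mk_eq_arcIn hs hx hy
  obtain ⟨δ, hδ, hδ'⟩ := exists_mk_eq_arcIn hs hy hz
  rw [← hγ', ← hδ', ← Path.Homotopic.Quotient.mk_trans]
  refine mk_eq_arcIn hs _ (fun t => ?_) hx hz
  rw [Path.trans_apply]
  split_ifs
  exacts [hγ _, hδ _]

@[simp]
theorem arcIn_trans_arcIn_trans (hs : IsSimplyConnected s) {x y z w : X} (hx : x ∈ s) (hy : y ∈ s)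
    (hz : z ∈ s) (p : Path.Homotopic.Quotient z w) :
    (arcIn hs hx hy).trans ((arcIn hs hy hz).trans p) = (arcIn hs hx hz).trans p := by
  rw [← Path.Homotopic.Quotient.trans_assoc, arcIn_trans_arcIn]

end SimplyConnected

/-- An open cover of a space by simply connected sets, all of which contain the base point `b`. The
intersections of its members need not be connected. -/
structure SimplyConnectedCover {X ι : Type*} [TopologicalSpace X] (b : X) (U : ι → Set X) :
    Prop where
  isOpen : ∀ i, IsOpen (U i)
  iUnion_eq : ⋃ i, U i = univ
  base_mem : ∀ i, b ∈ U i
  isSimplyConnected : ∀ i, IsSimplyConnected (U i)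

namespace SimplyConnectedCover

variable {X ι : Type*} [TopologicalSpace X] {b : X} {U : ι → Set X} (C : SimplyConnectedCover b U)
  {i j k : ι} {x y : X}

include C in
theorem exists_mem (x : X) : ∃ i, x ∈ U i :=
  iUnion_eq_univ_iff.mp C.iUnion_eq x

/-- The class of the loops that go from the base point to `x` inside `U j` and return inside `U i`,
the order being that of the product in the fundamental group. -/
noncomputable def loop (hi : x ∈ U i) (hj : x ∈ U j) : FundamentalGroup X b :=
  FundamentalGroup.fromPath ((arcIn (C.isSimplyConnected j) (C.base_mem j) hj).trans
    (arcIn (C.isSimplyConnected i) hi (C.base_mem i)))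

theorem loop_mul_loop (hi : x ∈ U i) (hj : x ∈ U j) (hk : x ∈ U k) :
    C.loop hi hj * C.loop hj hk = C.loop hi hk := by
  rw [FundamentalGroup.mul_def]
  change Path.Homotopic.Quotient.trans (.trans _ _) (.trans _ _) = Path.Homotopic.Quotient.trans _ _
  simp

@[simp]
theorem loop_self (hi : x ∈ U i) : C.loop hi hi = 1 :=
  mul_eq_left.mp (C.loop_mul_loop hi hi hi)

theorem inv_loop (hi : x ∈ U i) (hj : x ∈ U j) : (C.loop hi hj)⁻¹ = C.loop hj hi := by
  rw [inv_eq_iff_mul_eq_one, C.loop_mul_loop, C.loop_self]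

@[simp]
theorem loop_base (hi : b ∈ U i) (hj : b ∈ U j) : C.loop hi hj = 1 := by
  simp only [loop, arcIn_self, Path.Homotopic.Quotient.trans_refl]
  rfl

theorem loop_congr (h : JoinedIn (U i ∩ U j) x y) (hi : x ∈ U i) (hj : x ∈ U j) (hi' : y ∈ U i)
    (hj' : y ∈ U j) : C.loop hi hj = C.loop hi' hj' := by
  obtain ⟨γ, hγ⟩ := h
  have hγi := mk_eq_arcIn (C.isSimplyConnected i) γ (fun t => (hγ t).1) hi hi'
  have hγj := mk_eq_arcIn (C.isSimplyConnected j) γ (fun t => (hγ t).2) hj hj'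
  rw [loop, loop, ← arcIn_trans_arcIn _ hi hi', ← hγi, hγj, arcIn_trans_arcIn_trans]

theorem eq_top_of_forall_loop_mem (S : Subgroup (FundamentalGroup X b))
    (hS : ∀ i j x (hi : x ∈ U i) (hj : x ∈ U j), C.loop hi hj ∈ S) : S = ⊤ := by
  have closed_up : ∀ {x y : X} (p : Path.Homotopic.Quotient x y) i j (hi : x ∈ U i) (hj : y ∈ U j),
      FundamentalGroup.fromPath ((arcIn (C.isSimplyConnected i) (C.base_mem i) hi).trans
        (p.trans (arcIn (C.isSimplyConnected j) hj (C.base_mem j)))) ∈ S := by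
    intro x y p
    induction p using pathClass_induction_of_openCover C.isOpen C.iUnion_eq with
    | mk k x y γ hγ =>
      intro i j hi hj
      have hx : x ∈ U k := by simpa using hγ 0
      have hy : y ∈ U k := by simpa using hγ 1
      convert S.mul_mem (hS j k y hj hy) (hS k i x hx hi) using 1
      rw [mk_eq_arcIn (C.isSimplyConnected k) γ hγ hx hy, FundamentalGroup.mul_def]
      change _ = Path.Homotopic.Quotient.trans (.trans _ _) (.trans _ _)
      simp
    | trans x y z p q hp hq =>
      intro i j hi hj
      obtain ⟨k, hk⟩ := C.exists_mem y
      convert S.mul_mem (hq k j hk hj) (hp i k hi hk) using 1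
      rw [FundamentalGroup.mul_def]
      change _ = Path.Homotopic.Quotient.trans (.trans _ (.trans _ _)) (.trans _ (.trans _ _))
      simp
  rw [eq_top_iff]
  intro g _
  obtain ⟨i, hi⟩ := C.exists_mem b
  simpa using closed_up (FundamentalGroup.toPath g) i i hi hi

end SimplyConnectedCover

section Cocycle

variable {X ι G : Type*} [TopologicalSpace X] [Group G] {b : X} {U : ι → Set X}

/-- The transition functions of a principal bundle with discrete group `G`, trivial over each `U i`
and framed over the base point `b`. The values of `h i j` outside `U i ∩ U j` are irrelevant, except
at `b`. -/
structure IsCocycle (b : X) (U : ι → Set X) (h : ι → ι → X → G) : Prop where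
  eventually_eq : ∀ i j x, x ∈ U i → x ∈ U j → ∀ᶠ y in 𝓝 x, h i j y = h i j x
  mul : ∀ i j k x, x ∈ U i → x ∈ U j → x ∈ U k → h i j x * h j k x = h i k x
  base : ∀ i j, h i j b = 1

namespace IsCocycle

variable {h : ι → ι → X → G} (hh : IsCocycle b U h) (C : SimplyConnectedCover b U)
  {i j : ι} {x y : X}

include hh in
theorem self (hx : x ∈ U i) : h i i x = 1 :=
  mul_eq_left.mp (hh.mul i i i x hx hx hx)

section Bundle

variable [TopologicalSpace G] [DiscreteTopology G]

/-- The bundle with fibre `G` glued by left multiplication with the values of a cocycle. -/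
noncomputable def bundle : FiberBundleCore ι X G where
  baseSet := U
  isOpen_baseSet := C.isOpen
  indexAt x := (C.exists_mem x).choose
  mem_baseSet_at x := (C.exists_mem x).choose_spec
  coordChange i j x v := h j i x * v
  coordChange_self i x hx v := by rw [hh.self hx, one_mul]
  continuousOn_coordChange := by
    rintro i j ⟨x, v⟩ ⟨⟨hi, hj⟩, -⟩
    have hloc : ∀ᶠ p : X × G in 𝓝 (x, v), h j i p.1 * p.2 = h j i x * v := by
      have hsnd : ∀ᶠ w in 𝓝 v, w = v := by simp
      filter_upwards [(hh.eventually_eq j i x hj hi).prod_inl_nhds v, hsnd.prod_inr_nhds x]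
        with p hp hp'
      rw [hp, hp']
    exact (continuousAt_const.congr (hloc.mono fun _ => Eq.symm)).continuousWithinAt
  coordChange_comp := by
    rintro i j k x ⟨⟨hi, hj⟩, hk⟩ v
    rw [← mul_assoc, hh.mul k j i x hk hj hi]

theorem isCoveringMap_bundle : IsCoveringMap (hh.bundle C).proj :=
  FiberBundle.isCoveringMap (F := G) (E := (hh.bundle C).Fiber)

/-- The point over `x` whose coordinate in the trivialization over `U i` is `v`. -/
noncomputable def point (i : ι) (x : X) (v : G) : (hh.bundle C).proj ⁻¹' {x} :=
  ⟨⟨x, (hh.bundle C).coordChange i ((hh.bundle C).indexAt x) x v⟩, rfl⟩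

theorem point_eq_point (hi : x ∈ U i) (hj : x ∈ U j) (v : G) :
    hh.point C j x v = hh.point C i x (h i j x * v) :=
  Subtype.ext <| congrArg (Bundle.TotalSpace.mk x) <| Eq.symm <|
    (hh.bundle C).coordChange_comp j i _ x ⟨⟨hj, hi⟩, (hh.bundle C).mem_baseSet_at x⟩ v

theorem point_base_eq (i j : ι) (v : G) : hh.point C i b v = hh.point C j b v := by
  simp only [point, bundle, hh.base]

theorem bijective_point_base (i : ι) : Function.Bijective (hh.point C i b) := by
  have hpoint (v : G) : hh.point C i b v = ⟨⟨b, v⟩, rfl⟩ := by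
    simp only [point, bundle, hh.base, one_mul]
  constructor
  · intro v w hvw
    rw [hpoint, hpoint] at hvw
    exact eq_of_heq (Bundle.TotalSpace.mk.inj (congrArg Subtype.val hvw)).2
  · rintro ⟨⟨x, v⟩, rfl : x = b⟩
    exact ⟨v, hpoint v⟩

theorem monodromy_arcIn (hx : x ∈ U i) (hy : y ∈ U i) (v : G) :
    (hh.isCoveringMap_bundle C).monodromy (arcIn (C.isSimplyConnected i) hx hy)
      (hh.point C i x v) = hh.point C i y v := by
  obtain ⟨γ, hγ, hγ'⟩ := exists_mk_eq_arcIn (C.isSimplyConnected i) hx hy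
  let e := ((hh.bundle C).localTriv i).toOpenPartialHomeomorph
  have hsymm (t : unitInterval) : e.symm (γ t, v) =
      ⟨γ t, (hh.bundle C).coordChange i ((hh.bundle C).indexAt (γ t)) (γ t) v⟩ :=
    FiberBundleCore.localTriv_symm_apply ..
  let Γ : Path (hh.point C i x v).1 (hh.point C i y v).1 :=
    { toFun := fun t => e.symm (γ t, v)
      continuous_toFun := by
        refine e.continuousOn_symm.comp_continuous (by fun_prop) fun t => ?_
        rw [FiberBundleCore.mem_localTriv_target]
        exact hγ t
      source' := by rw [hsymm, γ.source]; rfl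
      target' := by rw [hsymm, γ.target]; rfl }
  rw [← hγ']
  exact (hh.isCoveringMap_bundle C).monodromy_eq_of_map_eq (.mk Γ) rfl

theorem monodromy_loop (k : ι) (hi : x ∈ U i) (hj : x ∈ U j) (v : G) :
    (hh.isCoveringMap_bundle C).monodromyPerm b (C.loop hi hj) (hh.point C k b v) =
      hh.point C k b (h i j x * v) := by
  rw [hh.point_base_eq C k j, hh.point_base_eq C k i, ← hh.monodromy_arcIn C hi (C.base_mem i),
    ← hh.point_eq_point C hi hj, ← hh.monodromy_arcIn C (C.base_mem j) hj,
    ← (hh.isCoveringMap_bundle C).monodromy_trans_apply]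
  rfl

end Bundle

include hh in
theorem exists_monoidHom :
    ∃ φ : FundamentalGroup X b →* G,
      ∀ i j x (hi : x ∈ U i) (hj : x ∈ U j), φ (C.loop hi hj) = h i j x := by
  let _ : TopologicalSpace G := ⊥
  have : DiscreteTopology G := ⟨rfl⟩
  obtain ⟨k, -⟩ := C.exists_mem b
  let ρ := (hh.isCoveringMap_bundle C).monodromyPerm b
  let e := Equiv.ofBijective _ (hh.bijective_point_base C k)
  let leftMul : G →* Equiv.Perm ((hh.bundle C).proj ⁻¹' {b}) :=
    e.permCongrHom.toMonoidHom.comp (MulAction.toPermHom G G)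
  have leftMul_injective : Function.Injective leftMul :=
    e.permCongrHom.injective.comp MulAction.toPerm_injective
  have hloop : ∀ i j x (hi : x ∈ U i) (hj : x ∈ U j), ρ (C.loop hi hj) = leftMul (h i j x) := by
    intro i j x hi hj
    refine Equiv.ext (e.surjective.forall.mpr fun v => ?_)
    calc ρ (C.loop hi hj) (e v) = e (h i j x * v) := hh.monodromy_loop C k hi hj v
      _ = leftMul (h i j x) (e v) := by simp [leftMul, Equiv.permCongrHom]
  have hrange : ∀ g, ρ g ∈ leftMul.range := by
    have htop := C.eq_top_of_forall_loop_mem (leftMul.range.comap ρ)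
      fun i j x hi hj => ⟨_, (hloop i j x hi hj).symm⟩
    exact fun g => (htop ▸ Subgroup.mem_top g : g ∈ leftMul.range.comap ρ)
  let φ := (MonoidHom.ofInjective leftMul_injective).symm.toMonoidHom.comp
    (ρ.codRestrict leftMul.range hrange)
  refine ⟨φ, fun i j x hi hj => ?_⟩
  have hφ (g) : leftMul (φ g) = ρ g :=
    congrArg Subtype.val ((MonoidHom.ofInjective leftMul_injective).apply_symm_apply _)
  exact leftMul_injective ((hφ _).trans (hloop i j x hi hj))

end IsCocycle

end Cocycle

/-! ### Configurations sorted by a linear functional -/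

section Configurations

theorem mk_eq_mk_of_comp {d N : ℕ} {x y : {x : Fin N → Fin d → ℝ // Function.Injective x}}
    (σ : Equiv.Perm (Fin N)) (hσ : y.1 = x.1 ∘ σ) :
    Quotient.mk (configSetoid d N) x = Quotient.mk _ y :=
  Quotient.sound ⟨σ, hσ⟩

theorem isOpenMap_mk_configSetoid (d N : ℕ) : IsOpenMap (Quotient.mk (configSetoid d N)) := by
  intro O hO
  let permute (σ : Equiv.Perm (Fin N)) (x : {x : Fin N → Fin d → ℝ // Function.Injective x}) :
      {x : Fin N → Fin d → ℝ // Function.Injective x} :=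
    ⟨x.1 ∘ σ, x.2.comp σ.injective⟩
  have continuous_permute (σ) : Continuous (permute σ) :=
    ((Pi.continuous_precomp σ).comp continuous_subtype_val).subtype_mk _
  have saturation : Quotient.mk (configSetoid d N) ⁻¹' (Quotient.mk (configSetoid d N) '' O) =
      ⋃ σ, permute σ ⁻¹' O := by
    ext x
    simp only [mem_preimage, mem_image, mem_iUnion]
    constructor
    · rintro ⟨y, hy, hyx⟩
      obtain ⟨σ, hσ⟩ := Quotient.exact hyx.symm
      have hperm : permute σ x = y := Subtype.ext hσ.symm
      exact ⟨σ, hperm ▸ hy⟩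
    · rintro ⟨σ, hσ⟩
      exact ⟨permute σ x, hσ, (mk_eq_mk_of_comp σ rfl).symm⟩
  rw [← isQuotientMap_quotient_mk'.isOpen_preimage]
  exact (congrArg IsOpen saturation).mpr
    (isOpen_iUnion fun σ => hO.preimage (continuous_permute σ))

theorem isOpen_setOf_strictMono (ι α : Type*) [Finite ι] [Preorder ι] [LinearOrder α]
    [TopologicalSpace α] [OrderClosedTopology α] : IsOpen {φ : ι → α | StrictMono φ} := by
  simp only [StrictMono, ofPred_forall]
  exact isOpen_iInter_of_finite fun a => isOpen_iInter_of_finite fun b =>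
    isOpen_iInter_of_finite fun _ => isOpen_lt (continuous_apply a) (continuous_apply b)

theorem convex_setOf_strictMono (ι : Type*) [Preorder ι] :
    Convex ℝ {φ : ι → ℝ | StrictMono φ} := by
  simp only [StrictMono, ofPred_forall]
  refine convex_iInter fun a => convex_iInter fun b => convex_iInter fun _ => ?_
  let difference : (ι → ℝ) →ₗ[ℝ] ℝ :=
    LinearMap.proj (R := ℝ) (φ := fun _ => ℝ) a - LinearMap.proj b
  simpa [difference, sub_neg] using convex_halfSpace_lt difference.isLinear 0

theorem sort_eq_of_strictMono_comp {N : ℕ} {α : Type*} [LinearOrder α] {φ : Fin N → α}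
    {σ : Equiv.Perm (Fin N)} (hσ : StrictMono (φ ∘ σ)) : Tuple.sort φ = σ := by
  have hφ : Function.Injective φ := by
    simpa [Function.comp_assoc] using hσ.injective.comp σ.symm.injective
  have h := Tuple.unique_monotone (Tuple.monotone_sort φ) hσ.monotone
  exact DFunLike.coe_injective (hφ.comp_left h)

theorem strictMono_comp_sort {N : ℕ} {α : Type*} [LinearOrder α] {φ : Fin N → α}
    (hφ : Function.Injective φ) : StrictMono (φ ∘ Tuple.sort φ) :=
  (Tuple.monotone_sort φ).strictMono_of_injective (hφ.comp (Tuple.sort φ).injective)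

variable {d N : ℕ} {f g : (Fin d → ℝ) →L[ℝ] ℝ}

/-- The tuples of points on which the functional `f` is increasing. -/
def sortedTuples (N : ℕ) (f : (Fin d → ℝ) →L[ℝ] ℝ) : Set (Fin N → Fin d → ℝ) :=
  {x | StrictMono (f ∘ x)}

theorem isOpen_sortedTuples (N : ℕ) (f : (Fin d → ℝ) →L[ℝ] ℝ) : IsOpen (sortedTuples N f) :=
  (isOpen_setOf_strictMono (Fin N) ℝ).preimage (f := (f ∘ ·)) (by fun_prop)

theorem convex_sortedTuples (N : ℕ) (f : (Fin d → ℝ) →L[ℝ] ℝ) : Convex ℝ (sortedTuples N f) :=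
  (convex_setOf_strictMono (Fin N)).linear_preimage (f.toLinearMap.compLeft (Fin N))

theorem injective_of_mem_sortedTuples {x : Fin N → Fin d → ℝ} (hx : x ∈ sortedTuples N f) :
    Function.Injective x :=
  hx.injective.of_comp

/-- The configuration underlying a sorted tuple. -/
def chart (f : (Fin d → ℝ) →L[ℝ] ℝ) (x : sortedTuples N f) : ConfigSpace d N :=
  Quotient.mk _ ⟨x.1, injective_of_mem_sortedTuples x.2⟩

theorem injective_chart : Function.Injective (chart f : sortedTuples N f → ConfigSpace d N) := by
  rintro ⟨x, hx⟩ ⟨y, hy⟩ hxy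
  obtain ⟨σ, rfl : y = x ∘ σ⟩ := Quotient.exact hxy
  have hσ : 1 = σ := (sort_eq_of_strictMono_comp (φ := f ∘ x) (σ := 1) hx).symm.trans
    (sort_eq_of_strictMono_comp (φ := f ∘ x) hy)
  simp [← hσ]

theorem isOpenEmbedding_chart :
    IsOpenEmbedding (chart f : sortedTuples N f → ConfigSpace d N) := by
  let incl (x : sortedTuples N f) : {x : Fin N → Fin d → ℝ // Function.Injective x} :=
    ⟨x.1, injective_of_mem_sortedTuples x.2⟩
  have isOpenEmbedding_incl : IsOpenEmbedding incl := by
    refine ⟨IsEmbedding.inclusion fun _ => injective_of_mem_sortedTuples, ?_⟩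
    exact (range_inclusion fun _ => injective_of_mem_sortedTuples).symm ▸
      (isOpen_sortedTuples N f).preimage continuous_subtype_val
  exact .of_continuous_injective_isOpenMap
    (continuous_quotient_mk'.comp isOpenEmbedding_incl.continuous) injective_chart
    ((isOpenMap_mk_configSetoid d N).comp isOpenEmbedding_incl.isOpenMap)

/-- The configurations whose points are separated by the functional `f`. -/
def separatedConfigs (N : ℕ) (f : (Fin d → ℝ) →L[ℝ] ℝ) : Set (ConfigSpace d N) :=
  range (chart f)

theorem chart_comp {x : sortedTuples N f} {w : Equiv.Perm (Fin N)}
    (hw : x.1 ∘ w ∈ sortedTuples N g) : chart g ⟨x.1 ∘ w, hw⟩ = chart f x :=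
  (mk_eq_mk_of_comp w rfl).symm

theorem mk_mem_separatedConfigs {x : {x : Fin N → Fin d → ℝ // Function.Injective x}}
    (hx : Function.Injective (f ∘ x.1)) : Quotient.mk _ x ∈ separatedConfigs N f :=
  ⟨⟨x.1 ∘ Tuple.sort (f ∘ x.1), strictMono_comp_sort hx⟩,
    (mk_eq_mk_of_comp _ rfl).symm⟩

theorem isOpen_separatedConfigs (N : ℕ) (f : (Fin d → ℝ) →L[ℝ] ℝ) :
    IsOpen (separatedConfigs N f) :=
  isOpenEmbedding_chart.isOpen_range

theorem isSimplyConnected_separatedConfigs (hf : (sortedTuples N f).Nonempty) :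
    IsSimplyConnected (separatedConfigs N f) := by
  have : ContractibleSpace (sortedTuples N f) := (convex_sortedTuples N f).contractibleSpace hf
  have : ContractibleSpace (separatedConfigs N f) :=
    isOpenEmbedding_chart.isEmbedding.toHomeomorph.contractibleSpace_iff.mp this
  exact SimplyConnectedSpace.ofContractible _

theorem eq_out_comp_sort {x : sortedTuples N f} {X : ConfigSpace d N} (hx : chart f x = X) :
    x.1 = X.out.1 ∘ Tuple.sort (f ∘ X.out.1) := by
  obtain ⟨σ, hσ : x.1 = X.out.1 ∘ σ⟩ := Quotient.exact (X.out_eq.trans hx.symm)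
  have hsorted : StrictMono ((f ∘ X.out.1) ∘ σ) := by
    rw [Function.comp_assoc, ← hσ]
    exact x.2
  rw [sort_eq_of_strictMono_comp hsorted, hσ]

/-- The permutation that carries the labelling of the points of a configuration in the order of `f`
to the labelling in the order of `g`. -/
noncomputable def crossing (f g : (Fin d → ℝ) →L[ℝ] ℝ) (X : ConfigSpace d N) :
    Equiv.Perm (Fin N) :=
  (Tuple.sort (f ∘ X.out.1))⁻¹ * Tuple.sort (g ∘ X.out.1)

@[simp]
theorem crossing_self (f : (Fin d → ℝ) →L[ℝ] ℝ) (X : ConfigSpace d N) : crossing f f X = 1 := by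
  simp [crossing]

theorem crossing_mul_crossing (f g h : (Fin d → ℝ) →L[ℝ] ℝ) (X : ConfigSpace d N) :
    crossing f g X * crossing g h X = crossing f h X := by
  simp [crossing, mul_assoc]

/-- The configurations separated both by `f` and by `g` whose crossing permutation is `w`. -/
def comparisonCell (f g : (Fin d → ℝ) →L[ℝ] ℝ) (w : Equiv.Perm (Fin N)) : Set (ConfigSpace d N) :=
  chart f '' {x | x.1 ∘ w ∈ sortedTuples N g}

theorem mem_comparisonCell_iff {w : Equiv.Perm (Fin N)} {X : ConfigSpace d N} :
    X ∈ comparisonCell f g w ↔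
      X ∈ separatedConfigs N f ∧ X ∈ separatedConfigs N g ∧ crossing f g X = w := by
  constructor
  · rintro ⟨x, hx, hX⟩
    have hX' := (chart_comp hx).trans hX
    refine ⟨⟨x, hX⟩, ⟨_, hX'⟩, ?_⟩
    have hw : X.out.1 ∘ (Tuple.sort (f ∘ X.out.1) * w : Equiv.Perm (Fin N)) =
        X.out.1 ∘ Tuple.sort (g ∘ X.out.1) := by
      rw [← eq_out_comp_sort hX', Equiv.Perm.coe_mul, ← Function.comp_assoc, ← eq_out_comp_sort hX]
    rw [crossing, inv_mul_eq_iff_eq_mul]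
    exact DFunLike.coe_injective (X.out.2.comp_left hw.symm)
  · rintro ⟨⟨x, hx⟩, ⟨y, hy⟩, rfl⟩
    refine ⟨x, ?_, hx⟩
    have hxy : x.1 ∘ crossing f g X = y.1 := by
      rw [eq_out_comp_sort hx, eq_out_comp_sort hy, crossing, Function.comp_assoc,
        ← Equiv.Perm.coe_mul, mul_inv_cancel_left]
    rw [mem_ofPred_eq, hxy]
    exact y.2

theorem mem_comparisonCell_crossing {X : ConfigSpace d N} (hf : X ∈ separatedConfigs N f)
    (hg : X ∈ separatedConfigs N g) : X ∈ comparisonCell f g (crossing f g X) :=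
  mem_comparisonCell_iff.mpr ⟨hf, hg, rfl⟩

theorem isOpen_comparisonCell (f g : (Fin d → ℝ) →L[ℝ] ℝ) (w : Equiv.Perm (Fin N)) :
    IsOpen (comparisonCell f g w) := by
  refine isOpenEmbedding_chart.isOpenMap _ ((isOpen_sortedTuples N g).preimage ?_)
  exact (Pi.continuous_precomp w).comp continuous_subtype_val

theorem joinedIn_of_mem_comparisonCell {w : Equiv.Perm (Fin N)} {X Y : ConfigSpace d N}
    (hX : X ∈ comparisonCell f g w) (hY : Y ∈ comparisonCell f g w) :
    JoinedIn (separatedConfigs N f ∩ separatedConfigs N g) X Y := by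
  have hconvex : Convex ℝ (sortedTuples N f ∩ (· ∘ w) ⁻¹' sortedTuples N g) :=
    (convex_sortedTuples N f).inter
      ((convex_sortedTuples N g).linear_preimage (LinearMap.funLeft ℝ (Fin d → ℝ) w))
  obtain ⟨x, hx, rfl⟩ := hX
  obtain ⟨y, hy, rfl⟩ := hY
  obtain ⟨γ, hγ⟩ :=
    (hconvex.isPathConnected ⟨x.1, x.2, hx⟩).joinedIn x.1 ⟨x.2, hx⟩ y.1 ⟨y.2, hy⟩
  let δ : Path x y :=
    { toFun := fun r => ⟨γ r, (hγ r).1⟩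
      source' := Subtype.ext γ.source
      target' := Subtype.ext γ.target }
  refine ⟨δ.map isOpenEmbedding_chart.continuous, fun r => ?_⟩
  have hcell : chart f (δ r) ∈ comparisonCell f g w := mem_image_of_mem _ (hγ r).2
  rw [mem_comparisonCell_iff] at hcell
  exact ⟨hcell.1, hcell.2.1⟩

end Configurations

/-! ### Particles on a line -/

section Particles

/-- The position at time `t` of the particle on the line that `p` encodes: its position at time `0`
is `p 0` and its velocity is `p 1`. -/
noncomputable def position (t : ℝ) : (Fin 2 → ℝ) →L[ℝ] ℝ :=
  .proj (φ := fun _ : Fin 2 => ℝ) 0 + t • .proj 1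

theorem position_apply (t : ℝ) (p : Fin 2 → ℝ) : position t p = p 0 + t * p 1 :=
  rfl

theorem position_lt_position_of_le {s t u : ℝ} (hst : s ≤ t) (htu : t ≤ u) {p q : Fin 2 → ℝ}
    (ht : position t q < position t p) (hu : position u p < position u q) :
    position s q < position s p := by
  simp only [position_apply] at *
  have slower : p 1 < q 1 := by
    by_contra! h
    linarith [mul_nonneg (sub_nonneg.mpr htu) (sub_nonneg.mpr h)]
  linarith [mul_nonneg (sub_nonneg.mpr hst) (sub_nonneg.mpr slower.le)]

theorem eq_of_position_eq {s t : ℝ} (hst : s ≠ t) {p q : Fin 2 → ℝ}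
    (hs : position s p = position s q) (ht : position t p = position t q) : p = q := by
  simp only [position_apply] at *
  have h₁ : p 1 = q 1 := mul_left_cancel₀ (sub_ne_zero.mpr hst) (by linear_combination hs - ht)
  have h₀ : p 0 = q 0 := by linear_combination hs - s * h₁
  ext i
  fin_cases i
  exacts [h₀, h₁]

theorem exists_injective_position_comp {ι : Type*} [Finite ι] {x : ι → Fin 2 → ℝ}
    (hx : Function.Injective x) : ∃ t, Function.Injective (position t ∘ x) := by
  let collisions (a b : ι) : Set ℝ := {t | a ≠ b ∧ position t (x a) = position t (x b)}
  have finite_collisions : (⋃ a, ⋃ b, collisions a b).Finite := by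
    refine finite_iUnion fun a => finite_iUnion fun b => Set.Subsingleton.finite ?_
    rintro s ⟨hab, hs⟩ t ⟨-, ht⟩
    by_contra hst
    exact hab (hx (eq_of_position_eq hst hs ht))
  obtain ⟨t, ht⟩ := finite_collisions.infinite_compl.nonempty
  refine ⟨t, fun a b hab => ?_⟩
  by_contra hne
  exact ht (mem_iUnion₂.mpr ⟨a, b, hne, hab⟩)

variable {N : ℕ}

/-- The particles that are at the positions `0, …, N - 1` at time `s` and have velocities `v`. -/
def launch (s : ℝ) (v : Fin N → ℝ) : Fin N → Fin 2 → ℝ :=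
  fun k => ![k - s * v k, v k]

theorem position_launch (t s : ℝ) (v : Fin N → ℝ) (k : Fin N) :
    position t (launch s v k) = k + (t - s) * v k := by
  simp only [position_apply, launch, Matrix.cons_val_zero, Matrix.cons_val_one]
  ring

theorem launch_mem_sortedTuples (s : ℝ) (v : Fin N → ℝ) :
    launch s v ∈ sortedTuples N (position s) := by
  intro a b hab
  simpa [position_launch] using hab

theorem launch_zero_mem_sortedTuples (s t : ℝ) :
    launch s (0 : Fin N → ℝ) ∈ sortedTuples N (position t) := by
  intro a b hab
  simpa [position_launch] using hab

theorem position_launch_lt {s t : ℝ} {v : Fin N → ℝ} {a b : Fin N}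
    (h : N ≤ (t - s) * (v b - v a)) :
    position t (launch s v a) < position t (launch s v b) := by
  have ha : (a : ℝ) < N := mod_cast a.isLt
  simp only [position_launch]
  linarith

/-- The configuration of motionless particles at the positions `0, …, N - 1`. -/
noncomputable def restConfig (N : ℕ) : ConfigSpace 2 N :=
  chart (position 0) ⟨launch 0 0, launch_mem_sortedTuples 0 0⟩

theorem restConfig_mem_comparisonCell (s t : ℝ) :
    restConfig N ∈ comparisonCell (position s) (position t) 1 :=
  ⟨⟨launch 0 0, launch_zero_mem_sortedTuples 0 s⟩, launch_zero_mem_sortedTuples 0 t, rfl⟩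

theorem simplyConnectedCover_separatedConfigs (N : ℕ) :
    SimplyConnectedCover (restConfig N) fun t => separatedConfigs N (position t) where
  isOpen t := isOpen_separatedConfigs N (position t)
  iUnion_eq := by
    refine iUnion_eq_univ_iff.mpr fun X => ?_
    obtain ⟨t, ht⟩ := exists_injective_position_comp X.out.2
    exact ⟨t, X.out_eq ▸ mk_mem_separatedConfigs ht⟩
  base_mem t := (mem_comparisonCell_iff.mp (restConfig_mem_comparisonCell t t)).1
  isSimplyConnected t := isSimplyConnected_separatedConfigs ⟨_, launch_mem_sortedTuples t 0⟩

/- Two particles that cross between the times `t` and `u` do not cross between `s` and `t`, since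
they meet at most once. -/
theorem crossing_lt_crossing {s t u : ℝ} (hst : s ≤ t) (htu : t ≤ u) {X : ConfigSpace 2 N}
    (hs : X ∈ separatedConfigs N (position s)) (ht : X ∈ separatedConfigs N (position t))
    (hu : X ∈ separatedConfigs N (position u)) {a b : Fin N} (hab : a < b)
    (hba : crossing (position t) (position u) X b < crossing (position t) (position u) X a) :
    crossing (position s) (position t) X (crossing (position t) (position u) X b) <
      crossing (position s) (position t) X (crossing (position t) (position u) X a) := by
  set v := crossing (position s) (position t) X with hv
  set w := crossing (position t) (position u) X with hw
  obtain ⟨x, hxt, hx⟩ := mem_comparisonCell_crossing hs ht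
  obtain ⟨y, hyu, hy⟩ := mem_comparisonCell_crossing hs hu
  obtain rfl : x = y := injective_chart (hx.trans hy.symm)
  rw [← hv] at hxt
  rw [← crossing_mul_crossing _ (position t), ← hv, ← hw] at hyu
  exact x.2.lt_iff_lt.mp (position_lt_position_of_le hst htu (hxt hba) (hyu hab))

end Particles

/-! ### The cocycle of crossings -/

section CrossingCocycle

theorem mul_eq_of_forall_le_mul_eq {ι G : Type*} [LinearOrder ι] [Group G] {c : ι → ι → G}
    (inv : ∀ s t, (c s t)⁻¹ = c t s)
    (mul : ∀ s t u, s ≤ t → t ≤ u → c s t * c t u = c s u) (s t u : ι) :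
    c s t * c t u = c s u := by
  rcases le_total s t with hst | hst <;> rcases le_total t u with htu | htu <;>
    rcases le_total s u with hsu | hsu
  · exact mul s t u hst htu
  · exact mul s t u hst htu
  · rw [← mul s u t hsu htu, ← inv t u, inv_mul_cancel_right]
  · rw [← inv u t, ← mul u s t hsu hst, mul_inv_rev, mul_inv_cancel_left, inv]
  · rw [← mul t s u hst hsu, ← inv t s, inv_mul_cancel_left]
  · rw [← inv t s, ← mul t u s htu hsu, mul_inv_rev, inv_mul_cancel_right, inv]
  all_goals rw [← inv u s, ← mul u t s htu hst, mul_inv_rev, inv, inv]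

variable {n : ℕ} {G : Type*} [Group G] {σ : Fin n → G}

/-- The element of `G` that records, in terms of the family `σ`, how the particles cross between
the times `s` and `t`. -/
noncomputable def crossingCocycle (σ : Fin n → G) (s t : ℝ) (X : ConfigSpace 2 (n + 1)) : G :=
  if s ≤ t then matsumotoLift σ (crossing (position s) (position t) X)
  else (matsumotoLift σ (crossing (position t) (position s) X))⁻¹

theorem crossingCocycle_of_le {s t : ℝ} (hst : s ≤ t) (X : ConfigSpace 2 (n + 1)) :
    crossingCocycle σ s t X = matsumotoLift σ (crossing (position s) (position t) X) :=
  if_pos hst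

theorem inv_crossingCocycle (s t : ℝ) (X : ConfigSpace 2 (n + 1)) :
    (crossingCocycle σ s t X)⁻¹ = crossingCocycle σ t s X := by
  rcases lt_trichotomy s t with h | rfl | h
  · simp [crossingCocycle, h.le, h.not_ge]
  · simp [crossingCocycle]
  · simp [crossingCocycle, h.le, h.not_ge]

theorem crossingCocycle_mul_of_le (hσ : IsBraidFamily σ) {s t u : ℝ} (hst : s ≤ t) (htu : t ≤ u)
    {X : ConfigSpace 2 (n + 1)} (hs : X ∈ separatedConfigs (n + 1) (position s))
    (ht : X ∈ separatedConfigs (n + 1) (position t))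
    (hu : X ∈ separatedConfigs (n + 1) (position u)) :
    crossingCocycle σ s t X * crossingCocycle σ t u X = crossingCocycle σ s u X := by
  rw [crossingCocycle_of_le hst, crossingCocycle_of_le htu, crossingCocycle_of_le (hst.trans htu),
    ← crossing_mul_crossing (position s) (position t) (position u), matsumotoLift_mul hσ]
  exact fun _ _ => crossing_lt_crossing hst htu hs ht hu

theorem isCocycle_crossingCocycle (hσ : IsBraidFamily σ) :
    IsCocycle (restConfig (n + 1)) (fun t => separatedConfigs (n + 1) (position t))
      (crossingCocycle σ) where
  eventually_eq s t X hs ht := by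
    filter_upwards [(isOpen_comparisonCell _ _ _).mem_nhds (mem_comparisonCell_crossing hs ht),
      (isOpen_comparisonCell _ _ _).mem_nhds (mem_comparisonCell_crossing ht hs)] with Y hst hts
    rw [crossingCocycle, crossingCocycle, (mem_comparisonCell_iff.mp hst).2.2,
      (mem_comparisonCell_iff.mp hts).2.2]
  mul s t u X hs ht hu :=
    mul_eq_of_forall_le_mul_eq (ι := {t // X ∈ separatedConfigs (n + 1) (position t)})
      (c := fun s t => crossingCocycle σ s t X) (fun s t => inv_crossingCocycle s.1 t.1 X)
      (fun s t u hst htu => crossingCocycle_mul_of_le hσ hst htu s.2 t.2 u.2)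
      ⟨s, hs⟩ ⟨t, ht⟩ ⟨u, hu⟩
  base s t := by
    have crossing_rest (s t : ℝ) : crossing (position s) (position t) (restConfig (n + 1)) = 1 :=
      (mem_comparisonCell_iff.mp (restConfig_mem_comparisonCell s t)).2.2
    simp [crossingCocycle, crossing_rest]

end CrossingCocycle

/-! ### Loops of permutations -/

section CrossingLoop

variable {N : ℕ} {s t u : ℝ} {X Y : ConfigSpace 2 N} {w : Equiv.Perm (Fin N)}

theorem loop_eq_loop_of_crossing_eq
    (hXs : X ∈ separatedConfigs N (position s)) (hXt : X ∈ separatedConfigs N (position t))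
    (hYs : Y ∈ separatedConfigs N (position s)) (hYt : Y ∈ separatedConfigs N (position t))
    (h : crossing (position s) (position t) X = crossing (position s) (position t) Y) :
    (simplyConnectedCover_separatedConfigs N).loop hXs hXt =
      (simplyConnectedCover_separatedConfigs N).loop hYs hYt :=
  (simplyConnectedCover_separatedConfigs N).loop_congr (joinedIn_of_mem_comparisonCell
    (mem_comparisonCell_iff.mpr ⟨hXs, hXt, h⟩) (mem_comparisonCell_crossing hYs hYt)) _ _ _ _

open Classical in
/-- The common class of the loops of the cover that pass from the time `t` to the time `s` at a
configuration with crossing permutation `w`. It has the junk value `1` if there is no such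
configuration, which happens only for `s = t`. -/
noncomputable def crossingLoop (s t : ℝ) (w : Equiv.Perm (Fin N)) :
    FundamentalGroup (ConfigSpace 2 N) (restConfig N) :=
  if h : (comparisonCell (position s) (position t) w).Nonempty then
    (simplyConnectedCover_separatedConfigs N).loop (mem_comparisonCell_iff.mp h.some_mem).1
      (mem_comparisonCell_iff.mp h.some_mem).2.1
  else 1

theorem loop_eq_crossingLoop (hs : X ∈ separatedConfigs N (position s))
    (ht : X ∈ separatedConfigs N (position t)) :
    (simplyConnectedCover_separatedConfigs N).loop hs ht =
      crossingLoop s t (crossing (position s) (position t) X) := by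
  have h := mem_comparisonCell_crossing hs ht
  rw [crossingLoop, dif_pos ⟨X, h⟩]
  exact loop_eq_loop_of_crossing_eq _ _ _ _
    (mem_comparisonCell_iff.mp (nonempty_of_mem h).some_mem).2.2.symm

@[simp]
theorem crossingLoop_one (s t : ℝ) : crossingLoop s t (1 : Equiv.Perm (Fin N)) = 1 := by
  obtain ⟨hs, ht, h⟩ := mem_comparisonCell_iff.mp (restConfig_mem_comparisonCell (N := N) s t)
  rw [← h, ← loop_eq_crossingLoop hs ht, SimplyConnectedCover.loop_base]

theorem crossingLoop_mul_crossingLoop {x : Fin N → Fin 2 → ℝ} {v₁ v₂ v₃ : Equiv.Perm (Fin N)}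
    (h₁ : x ∘ v₁ ∈ sortedTuples N (position s)) (h₂ : x ∘ v₂ ∈ sortedTuples N (position t))
    (h₃ : x ∘ v₃ ∈ sortedTuples N (position u)) :
    crossingLoop s t (v₁⁻¹ * v₂) * crossingLoop t u (v₂⁻¹ * v₃) =
      crossingLoop s u (v₁⁻¹ * v₃) := by
  have mem_cell {v : Equiv.Perm (Fin N)} {r : ℝ} (h : x ∘ v ∈ sortedTuples N (position r)) :
      chart (position s) ⟨x ∘ v₁, h₁⟩ ∈
        comparisonCell (position s) (position r) (v₁⁻¹ * v) := by
    refine ⟨_, ?_, rfl⟩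
    simpa [Function.comp_assoc, ← Equiv.Perm.coe_mul] using h
  obtain ⟨hs, ht, hst⟩ := mem_comparisonCell_iff.mp (mem_cell h₂)
  obtain ⟨-, hu, hsu⟩ := mem_comparisonCell_iff.mp (mem_cell h₃)
  have htu : crossing (position t) (position u) (chart (position s) ⟨x ∘ v₁, h₁⟩) = v₂⁻¹ * v₃ := by
    refine mul_left_cancel (a := v₁⁻¹ * v₂) ?_
    rw [← hst, crossing_mul_crossing, hsu, hst]
    group
  rw [← hst, ← htu, ← hsu, ← loop_eq_crossingLoop hs ht, ← loop_eq_crossingLoop ht hu,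
    ← loop_eq_crossingLoop hs hu, SimplyConnectedCover.loop_mul_loop]

theorem launch_comp_mem_sortedTuples {c : ℝ} (h : N ≤ (t - s) * c) :
    launch s (fun k => c * (w⁻¹ k : Fin N)) ∘ w ∈ sortedTuples N (position t) := by
  intro a b hab
  have hab' : (a : ℝ) + 1 ≤ b := mod_cast hab
  refine position_launch_lt ?_
  simp only [Equiv.Perm.inv_def, Equiv.symm_apply_apply]
  nlinarith [N.cast_nonneg (α := ℝ)]

theorem crossingLoop_eq_of_lt_of_le (hst : s < t) (htu : t ≤ u) (w : Equiv.Perm (Fin N)) :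
    crossingLoop s u w = crossingLoop s t w := by
  have speed : (t - s) * (N / (t - s)) = N := mul_div_cancel₀ _ (sub_pos.mpr hst).ne'
  have h : N ≤ (u - s) * (N / (t - s)) :=
    speed.ge.trans <| mul_le_mul_of_nonneg_right (sub_le_sub_right htu s) <|
      div_nonneg N.cast_nonneg (sub_nonneg.mpr hst.le)
  simpa using (crossingLoop_mul_crossingLoop (v₁ := 1) (launch_mem_sortedTuples s _)
    (launch_comp_mem_sortedTuples (w := w) speed.ge) (launch_comp_mem_sortedTuples h)).symm

theorem crossingLoop_eq_of_le_of_lt (hst : s ≤ t) (htu : t < u) (w : Equiv.Perm (Fin N)) :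
    crossingLoop s u w = crossingLoop t u w := by
  have speed : (t - u) * (N / (t - u)) = N := mul_div_cancel₀ _ (sub_neg.mpr htu).ne
  have h : N ≤ (s - u) * (N / (t - u)) :=
    speed.ge.trans <| mul_le_mul_of_nonpos_right (sub_le_sub_right hst u) <|
      div_nonpos_of_nonneg_of_nonpos N.cast_nonneg (sub_nonpos.mpr htu.le)
  simpa using (crossingLoop_mul_crossingLoop (v₃ := 1)
    (launch_comp_mem_sortedTuples (w := w⁻¹) h) (launch_comp_mem_sortedTuples speed.ge)
    (launch_mem_sortedTuples u _)).symm

/-- The positive permutation braid of `w`: the class of the loops that permute the particles by `w`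
in such a way that every two of them cross at most once, always in the same direction. -/
noncomputable def permLoop (w : Equiv.Perm (Fin N)) :
    FundamentalGroup (ConfigSpace 2 N) (restConfig N) :=
  crossingLoop 0 1 w

theorem crossingLoop_eq_permLoop (hst : s < t) (w : Equiv.Perm (Fin N)) :
    crossingLoop s t w = permLoop w := by
  have enlarge {s t : ℝ} (hst : s < t) {s' t' : ℝ} (hs : s' ≤ s) (ht : t ≤ t') :
      crossingLoop s t w = crossingLoop s' t' w := by
    rw [← crossingLoop_eq_of_lt_of_le hst ht, crossingLoop_eq_of_le_of_lt hs (hst.trans_le ht)]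
  rw [permLoop, enlarge hst (min_le_left s 0) (le_max_left t 1),
    ← enlarge one_pos (min_le_right s 0) (le_max_right t 1)]

@[simp]
theorem permLoop_one : permLoop (1 : Equiv.Perm (Fin N)) = 1 :=
  crossingLoop_one 0 1

end CrossingLoop

section AdjacentCrossing

variable {n : ℕ}

/-- Velocities that increase with the label, by more than `n + 1` at each step, except that the
particle `i + 1` is slightly slower than the particle `i`. If particles with these velocities start
at time `0` from distinct positions in `{0, …, n}`, with `i` to the left of `i + 1`, then `i`
overtakes `i + 1` between the times `1` and `2 * (n + 1)`, and all other crossings take place before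
time `1`. -/
noncomputable def adjVelocity (i : Fin n) (k : Fin (n + 1)) : ℝ :=
  if k = i.succ then (n + 2) * i - 1 / 2 else (n + 2) * k

theorem adjVelocity_castSucc_sub_succ (i : Fin n) :
    adjVelocity i i.castSucc - adjVelocity i i.succ = 1 / 2 := by
  simp [adjVelocity, Fin.ext_iff]

theorem le_adjVelocity_sub {i : Fin n} {a b : Fin (n + 1)} (hab : a < b)
    (hne : ¬(a = i.castSucc ∧ b = i.succ)) : n + 1 ≤ adjVelocity i b - adjVelocity i a := by
  have hab' : (a : ℝ) + 1 ≤ b := mod_cast hab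
  simp only [adjVelocity]
  split_ifs with hb ha ha
  · exact absurd (ha.trans hb.symm) hab.ne
  · have hai : a.val + 1 ≤ i.val := by
      have hne' : a.val ≠ i.val := fun h => hne ⟨Fin.ext h, hb⟩
      simp only [hb, Fin.lt_def, Fin.val_succ] at hab
      omega
    have hai' : (a : ℝ) + 1 ≤ i := mod_cast hai
    nlinarith
  · subst ha
    simp only [Fin.val_succ] at hab'
    push_cast at hab'
    nlinarith
  · nlinarith

variable {w : Equiv.Perm (Fin (n + 1))} {i : Fin n}

theorem position_launch_adjVelocity_lt {t : ℝ} (ht : 1 ≤ t) {a b : Fin (n + 1)} (hab : a < b)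
    (hne : ¬(a = i.castSucc ∧ b = i.succ)) :
    position t (launch 0 (adjVelocity i ∘ w.symm) (w a)) <
      position t (launch 0 (adjVelocity i ∘ w.symm) (w b)) := by
  have h := le_adjVelocity_sub hab hne
  refine position_launch_lt ?_
  simp only [Function.comp_apply, Equiv.symm_apply_apply, sub_zero]
  push_cast
  nlinarith [n.cast_nonneg (α := ℝ)]

theorem launch_adjVelocity_comp_mem_sortedTuples (hi : w i.castSucc < w i.succ) :
    launch 0 (adjVelocity i ∘ w.symm) ∘ w ∈ sortedTuples (n + 1) (position 1) := by
  intro a b hab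
  by_cases hne : a = i.castSucc ∧ b = i.succ
  · obtain ⟨rfl, rfl⟩ := hne
    have hi' : (w i.castSucc : ℝ) + 1 ≤ w i.succ := mod_cast hi
    simp only [Function.comp_apply, position_launch, Equiv.symm_apply_apply]
    linarith [adjVelocity_castSucc_sub_succ i]
  · exact position_launch_adjVelocity_lt le_rfl hab hne

theorem launch_adjVelocity_comp_mul_adjSwap_mem_sortedTuples (w : Equiv.Perm (Fin (n + 1)))
    (i : Fin n) :
    launch 0 (adjVelocity i ∘ w.symm) ∘ (w * adjSwap i : Equiv.Perm (Fin (n + 1))) ∈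
      sortedTuples (n + 1) (position (2 * (n + 1))) := by
  intro a b hab
  by_cases hne : a = i.castSucc ∧ b = i.succ
  · obtain ⟨rfl, rfl⟩ := hne
    refine position_launch_lt ?_
    rw [sub_zero, Function.comp_apply, Function.comp_apply]
    simp only [Equiv.Perm.mul_apply, adjSwap_castSucc, adjSwap_succ, Equiv.symm_apply_apply,
      adjVelocity_castSucc_sub_succ]
    push_cast
    linarith
  · have hne' : ¬(adjSwap i a = i.castSucc ∧ adjSwap i b = i.succ) := by
      grind [adjSwap]
    exact position_launch_adjVelocity_lt (by linarith [n.cast_nonneg (α := ℝ)])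
      (adjSwap_lt_adjSwap hab hne) hne'

theorem permLoop_mul_adjSwap (w : Equiv.Perm (Fin (n + 1))) (i : Fin n)
    (hi : w i.castSucc < w i.succ) :
    permLoop (w * adjSwap i) = permLoop w * permLoop (adjSwap i) := by
  have late : (1 : ℝ) < 2 * (n + 1) := by linarith [n.cast_nonneg (α := ℝ)]
  have h := crossingLoop_mul_crossingLoop (v₁ := 1) (launch_mem_sortedTuples 0 _)
    (launch_adjVelocity_comp_mem_sortedTuples hi)
    (launch_adjVelocity_comp_mul_adjSwap_mem_sortedTuples w i)
  simpa [crossingLoop_eq_permLoop late, crossingLoop_eq_permLoop (one_pos.trans late),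
    crossingLoop_eq_permLoop one_pos] using h.symm

end AdjacentCrossing

/-! ### The isomorphism -/

section Isomorphism

theorem comparisonCell_nonempty {N : ℕ} {s t : ℝ} (hst : s < t) (w : Equiv.Perm (Fin N)) :
    (comparisonCell (position s) (position t) w).Nonempty :=
  ⟨_, ⟨_, launch_mem_sortedTuples s _⟩, launch_comp_mem_sortedTuples
    (mul_div_cancel₀ (N : ℝ) (sub_pos.mpr hst).ne').ge, rfl⟩

theorem isBraidFamily_permLoop (n : ℕ) :
    IsBraidFamily fun i : Fin n => permLoop (adjSwap i) :=
  isBraidFamily_of_mul_adjSwap permLoop_mul_adjSwap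

theorem exists_monoidHom_permLoop_adjSwap (n : ℕ) :
    ∃ φ : FundamentalGroup (ConfigSpace 2 (n + 1)) (restConfig (n + 1)) →*
      PresentedGroup (braidRels n), ∀ i, φ (permLoop (adjSwap i)) = .of i := by
  obtain ⟨φ, hφ⟩ := (isCocycle_crossingCocycle (isBraidFamily_of n)).exists_monoidHom
    (simplyConnectedCover_separatedConfigs (n + 1))
  refine ⟨φ, fun i => ?_⟩
  obtain ⟨X, hX⟩ := comparisonCell_nonempty one_pos (adjSwap i)
  obtain ⟨h₀, h₁, hcross⟩ := mem_comparisonCell_iff.mp hX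
  rw [permLoop, ← hcross, ← loop_eq_crossingLoop h₀ h₁, hφ, crossingCocycle_of_le zero_le_one,
    hcross, matsumotoLift_adjSwap (isBraidFamily_of n)]

theorem permLoop_mem_range_lift {n : ℕ} (w : Equiv.Perm (Fin (n + 1))) :
    permLoop w ∈ (isBraidFamily_permLoop n).lift.range := by
  induction w using perm_ascent_induction with
  | one => simp only [permLoop_one, one_mem]
  | mul_adjSwap w i hi ih =>
    rw [permLoop_mul_adjSwap w i hi]
    exact mul_mem ih ⟨_, (isBraidFamily_permLoop n).lift_of i⟩

theorem surjective_lift_permLoop (n : ℕ) :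
    Function.Surjective (isBraidFamily_permLoop n).lift := by
  let C := simplyConnectedCover_separatedConfigs (n + 1)
  have loop_mem_of_lt {s t : ℝ} (hst : s < t) {X : ConfigSpace 2 (n + 1)}
      (hs : X ∈ separatedConfigs (n + 1) (position s))
      (ht : X ∈ separatedConfigs (n + 1) (position t)) :
      C.loop hs ht ∈ (isBraidFamily_permLoop n).lift.range := by
    rw [loop_eq_crossingLoop, crossingLoop_eq_permLoop hst]
    exact permLoop_mem_range_lift _
  refine MonoidHom.range_eq_top.mp (C.eq_top_of_forall_loop_mem _ fun s t X hs ht => ?_)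
  rcases lt_trichotomy s t with hst | rfl | hts
  · exact loop_mem_of_lt hst hs ht
  · rw [C.loop_self]
    exact one_mem _
  · rw [← C.inv_loop]
    exact inv_mem (loop_mem_of_lt hts ht hs)

theorem injective_lift_permLoop (n : ℕ) :
    Function.Injective (isBraidFamily_permLoop n).lift := by
  obtain ⟨φ, hφ⟩ := exists_monoidHom_permLoop_adjSwap n
  have left_inv : φ.comp (isBraidFamily_permLoop n).lift = MonoidHom.id _ :=
    PresentedGroup.ext fun i => by simp [hφ]
  exact Function.LeftInverse.injective (DFunLike.congr_fun left_inv)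

/-- The isomorphism from the braid group to the fundamental group of the configuration space that
sends each generator to the loop exchanging two adjacent particles. -/
noncomputable def braidMulEquiv (n : ℕ) : PresentedGroup (braidRels n) ≃*
    FundamentalGroup (ConfigSpace 2 (n + 1)) (restConfig (n + 1)) :=
  .ofBijective (isBraidFamily_permLoop n).lift
    ⟨injective_lift_permLoop n, surjective_lift_permLoop n⟩

theorem joined_restConfig {N : ℕ} (X : ConfigSpace 2 N) : Joined X (restConfig N) := by
  let C := simplyConnectedCover_separatedConfigs N
  obtain ⟨t, ht⟩ := C.exists_mem X
  exact ((C.isSimplyConnected t).isPathConnected.joinedIn X ht _ (C.base_mem t)).joined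

end Isomorphism

end ArtinBraid

/-- **Artin's theorem (planar case).**
The fundamental group of the unordered configuration space of `N` distinct points in the
plane, based at any point, is isomorphic to the braid group `B_N`. -/
theorem artin_braid_group (N : ℕ) (hN : 1 ≤ N) (X : ConfigSpace 2 N) :
    Nonempty (FundamentalGroup (ConfigSpace 2 N) X ≃* BraidGroup N) := by
  obtain ⟨n, rfl⟩ := Nat.exists_eq_add_of_le' hN
  exact ⟨(FundamentalGroup.fundamentalGroupMulEquivOfPath
    (ArtinBraid.joined_restConfig X).somePath).trans (ArtinBraid.braidMulEquiv n).symm⟩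
end
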